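/- arXiv:2412.07281 — 7 statements merged into one kernel-verified Lean document; each statement's English description precedes it below -/
import Mathlib

section
/- Let S be a numerical semigroup with multiplicity m, let a be a minimal generator of S, and suppose a > max(m, F(S)). Then S \ {a} is a numerical semigroup and 𝔑(S) is a proper subset of 𝔑(S \ {a}). -/
open Pointwise

/-- A numerical semigroup: an additive submonoid of `ℕ` with finite complement. -/
def IsNumericalSemigroup (S : Set ℕ) : Prop :=
  0 ∈ S ∧ (∀ a ∈ S, ∀ b ∈ S, a + b ∈ S) ∧ Sᶜ.Finite

/-- A normalized (relative) ideal of `S`: a subset of `ℕ` with `min I = 0`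
(equivalently `0 ∈ I`) satisfying `I + S ⊆ I`. -/
def IsNormalizedIdeal (S I : Set ℕ) : Prop :=
  0 ∈ I ∧ ∀ i ∈ I, ∀ s ∈ S, i + s ∈ I

/-- The set `𝔑(S)` of normalized ideals of `S`. -/
def NI (S : Set ℕ) : Set (Set ℕ) := {I : Set ℕ | IsNormalizedIdeal S I}

/-- The multiplicity of `S`: its least nonzero element. -/
noncomputable def multNS (S : Set ℕ) : ℕ := sInf {n : ℕ | n ∈ S ∧ n ≠ 0}

/-- The Frobenius number of `S` (or of an ideal): the largest natural number not in `S`. -/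
noncomputable def frobNS (S : Set ℕ) : ℕ := sSup Sᶜ

/-- A minimal generator of `S`: a nonzero element of `S` that is not the sum
of two nonzero elements of `S`. -/
def IsMinimalGenerator (S : Set ℕ) (a : ℕ) : Prop :=
  a ∈ S ∧ a ≠ 0 ∧ ¬ ∃ b ∈ S, ∃ c ∈ S, b ≠ 0 ∧ c ≠ 0 ∧ a = b + c

/-- A minimal generator of an ideal `I` of a numerical semigroup `T`:
an element `x ∈ I` with `x ≠ y + t` for every `y ∈ I` and nonzero `t ∈ T`. -/
def IsMinGenOfIdeal (T I : Set ℕ) (x : ℕ) : Prop :=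
  x ∈ I ∧ ∀ y ∈ I, ∀ t ∈ T, t ≠ 0 → x ≠ y + t

/-- The order `⪯` on normalized ideals: `I ⪯ J` iff `I + K = J` for some `K ∈ 𝔑(S)`. -/
def Preceq (S I J : Set ℕ) : Prop :=
  ∃ K : Set ℕ, IsNormalizedIdeal S K ∧ I + K = J

/-- `M` is the supremum of `{I, J}` in `(𝔑(S), ⪯)`. -/
def IsSupNI (S I J M : Set ℕ) : Prop :=
  IsNormalizedIdeal S M ∧ Preceq S I M ∧ Preceq S J M ∧
    ∀ L : Set ℕ, IsNormalizedIdeal S L → Preceq S I L → Preceq S J L → Preceq S M L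

/-- `M` is the infimum of `{I, J}` in `(𝔑(S), ⪯)`. -/
def IsInfNI (S I J M : Set ℕ) : Prop :=
  IsNormalizedIdeal S M ∧ Preceq S M I ∧ Preceq S M J ∧
    ∀ L : Set ℕ, IsNormalizedIdeal S L → Preceq S L I → Preceq S L J → Preceq S L M

/-- `(𝔑(S), ⪯)` is a lattice: every pair of normalized ideals has a supremum
and an infimum with respect to `⪯`. -/
def NILattice (S : Set ℕ) : Prop :=
  ∀ I J : Set ℕ, IsNormalizedIdeal S I → IsNormalizedIdeal S J →
    (∃ M : Set ℕ, IsSupNI S I J M) ∧ (∃ M : Set ℕ, IsInfNI S I J M)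

/-- The ordinary numerical semigroup `H_m = {0} ∪ {n : n ≥ m}`. -/
def ordinaryNS (m : ℕ) : Set ℕ := {0} ∪ {n : ℕ | m ≤ n}

/-- `I ∈ 𝔑(S) \ {S}` is `+`-irreducible if `I = J + K` with `J, K ∈ 𝔑(S)`
implies `I = J` or `I = K`. -/
def PlusIrreducible (S I : Set ℕ) : Prop :=
  IsNormalizedIdeal S I ∧ I ≠ S ∧
    ∀ J K : Set ℕ, IsNormalizedIdeal S J → IsNormalizedIdeal S K → I = J + K → I = J ∨ I = K

/-- if `a` is a minimal generator of `S` with `a > max (m S) (F S)`,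
then `S \ {a}` is a numerical semigroup and `𝔑(S) ⊊ 𝔑(S \ {a})`. -/
theorem NI_ssubset_NI_remove_min_gen (S : Set ℕ) (hS : IsNumericalSemigroup S)
    (a : ℕ) (ha : IsMinimalGenerator S a) (hgt : max (multNS S) (frobNS S) < a) :
    IsNumericalSemigroup (S \ {a}) ∧ NI S ⊂ NI (S \ {a}) := by
  obtain ⟨h0, hadd, hfin⟩ := hS
  obtain ⟨haS, ha0, hmin⟩ := ha
  have hT : ∀ x ∈ S \ {a}, ∀ y ∈ S \ {a}, x + y ∈ S \ {a} := by
    rintro x ⟨hx, hxa⟩ y ⟨hy, hya⟩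
    refine ⟨hadd x hx y hy, fun h => ?_⟩
    have h' : x + y = a := h
    have hxa' : x ≠ a := hxa
    have hya' : y ≠ a := hya
    exact hmin ⟨x, hx, y, hy, by omega, by omega, h'.symm⟩
  have h0T : 0 ∈ S \ {a} := ⟨h0, fun h => ha0 (Eq.symm h)⟩
  refine ⟨⟨h0T, hT, ?_⟩, ?_, ?_⟩
  · refine (hfin.union (Set.finite_singleton a)).subset ?_
    intro x hx
    by_cases hxS : x ∈ S
    · right
      by_contra hxa
      exact hx ⟨hxS, hxa⟩
    · exact Or.inl hxS
  · intro I hI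
    exact ⟨hI.1, fun i hi s hs => hI.2 i hi s hs.1⟩
  · intro hsub
    have h1 : S \ {a} ∈ NI S := hsub (show IsNormalizedIdeal _ _ from ⟨h0T, hT⟩)
    have h2 := h1.2 0 h0T a haS
    rw [zero_add] at h2
    exact h2.2 rfl
end

section
/- Let S be a numerical semigroup with multiplicity m, let a be a minimal generator of S with a > max(m, F(S)), and set T = S \ {a}. Then 𝔑(T) \ 𝔑(S) is exactly the set of normalized ideals of T that do not contain a; that is, for I ∈ 𝔑(T), one has I ∈ 𝔑(S) if and only if a ∈ I. -/
open Pointwise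

/-- with `T = S \ {a}`, an ideal `I ∈ 𝔑(T)` belongs to `𝔑(S)` if
and only if `a ∈ I`; thus `𝔑(T) \ 𝔑(S)` consists of the normalized ideals of
`T` not containing `a`. -/
theorem mem_NI_iff_mem_remove_min_gen (S : Set ℕ) (hS : IsNumericalSemigroup S)
    (a : ℕ) (ha : IsMinimalGenerator S a) (hgt : max (multNS S) (frobNS S) < a) :
    ∀ I : Set ℕ, IsNormalizedIdeal (S \ {a}) I → (IsNormalizedIdeal S I ↔ a ∈ I) := by
  intro I hI
  constructor
  · intro h
    simpa using h.2 0 h.1 a ha.1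
  · intro haI
    refine ⟨hI.1, fun i hi s hs => ?_⟩
    by_cases hsa : s = a
    · subst hsa
      by_cases hi0 : i = 0
      · subst hi0
        simpa using haI
      · have hmem : i + s ∈ S := by
          by_contra hn
          have h1 : i + s ≤ frobNS S := le_csSup hS.2.2.bddAbove hn
          have h2 := le_max_right (multNS S) (frobNS S)
          omega
        have h3 := hI.2 0 hI.1 (i + s) ⟨hmem, by simpa using hi0⟩
        simpa using h3
    · exact hI.2 i hi s ⟨hs, hsa⟩
end

section
/- Let S be a numerical semigroup with multiplicity m, let a be a minimal generator of S with a > max(m, F(S)), and set T = S \ {a}. Then for every I ∈ 𝔑(T) with a ∉ I, one has I + S = I ∪ {a}, and moreover I ∪ {a} covers I in the poset (𝔑(T), ⪯). -/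
open Pointwise

/-- with `T = S \ {a}`, for every `I ∈ 𝔑(T)` with `a ∉ I` one has
`I + S = I ∪ {a}`, and `I ∪ {a}` covers `I` in the poset `(𝔑(T), ⪯)`. -/
theorem add_S_eq_union_and_covers (S : Set ℕ) (hS : IsNumericalSemigroup S)
    (a : ℕ) (ha : IsMinimalGenerator S a) (hgt : max (multNS S) (frobNS S) < a) :
    ∀ I : Set ℕ, IsNormalizedIdeal (S \ {a}) I → a ∉ I →
      I + S = I ∪ {a} ∧
      (Preceq (S \ {a}) I (I ∪ {a}) ∧ I ≠ I ∪ {a}) ∧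
      ¬ ∃ C : Set ℕ, IsNormalizedIdeal (S \ {a}) C ∧
        (Preceq (S \ {a}) I C ∧ I ≠ C) ∧
        (Preceq (S \ {a}) C (I ∪ {a}) ∧ C ≠ I ∪ {a}) := by
  intro I hI haI
  obtain ⟨hS0, hSadd, hSfin⟩ := hS
  have hbig : ∀ n, a < n → n ∈ I := by
    intro n hn
    have hnS : n ∈ S := by
      by_contra h
      have h1 : n ≤ frobNS S := le_csSup hSfin.bddAbove h
      have h2 := le_max_right (multNS S) (frobNS S)
      omega
    have h := hI.2 0 hI.1 n ⟨hnS, by simp; omega⟩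
    simpa using h
  have hsum : I + S = I ∪ {a} := by
    ext x
    constructor
    · rintro ⟨i, hi, s, hs, rfl⟩
      by_cases hsa : s = a
      · subst hsa
        rcases Nat.eq_zero_or_pos i with h0 | h0
        · right; simp [h0]
        · left; exact hbig _ (by show s < i + s; omega)
      · left; exact hI.2 i hi s ⟨hs, hsa⟩
    · rintro (h | h)
      · exact ⟨x, h, 0, hS0, by simp⟩
      · exact ⟨0, hI.1, a, ha.1, by simpa using h.symm⟩
  have hsub : ∀ A K : Set ℕ, 0 ∈ K → A ⊆ A + K := by
    intro A K hK x hx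
    exact ⟨x, hx, 0, hK, by simp⟩
  refine ⟨hsum, ⟨⟨S, ⟨hS0, fun i hi s hs => hSadd i hi s hs.1⟩, hsum⟩, ?_⟩, ?_⟩
  · intro h
    apply haI
    rw [h]
    right; rfl
  · rintro ⟨C, hC, ⟨⟨K, hK, hIK⟩, hne⟩, ⟨⟨L, hL, hCL⟩, hne2⟩⟩
    have h1 : I ⊆ C := hIK ▸ hsub I K hK.1
    have h2 : C ⊆ I ∪ {a} := hCL ▸ hsub C L hL.1
    by_cases hac : a ∈ C
    · apply hne2
      apply Set.Subset.antisymm h2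
      rintro x (h | h)
      · exact h1 h
      · rw [Set.mem_singleton_iff.1 h]; exact hac
    · apply hne
      apply Set.Subset.antisymm h1
      intro x hx
      rcases h2 hx with h | h
      · exact h
      · exact absurd (Set.mem_singleton_iff.1 h ▸ hx) hac
end

section
/- For every integer m ≥ 1, 𝔑(H_m) is a proper subset of 𝔑(H_{m+1}); moreover, for every I ∈ 𝔑(H_{m+1}), one has I ∈ 𝔑(H_m) if and only if m ∈ I. -/
open Pointwise

/-- `𝔑(H_m) ⊊ 𝔑(H_{m+1})`, and for `I ∈ 𝔑(H_{m+1})` one has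
`I ∈ 𝔑(H_m)` iff `m ∈ I`. -/
theorem NI_ordinary_ssubset_succ (m : ℕ) (hm : 1 ≤ m) :
    NI (ordinaryNS m) ⊂ NI (ordinaryNS (m + 1)) ∧
    ∀ I : Set ℕ, IsNormalizedIdeal (ordinaryNS (m + 1)) I →
      (IsNormalizedIdeal (ordinaryNS m) I ↔ m ∈ I) := by
  have key : ∀ I : Set ℕ, IsNormalizedIdeal (ordinaryNS (m + 1)) I →
      (IsNormalizedIdeal (ordinaryNS m) I ↔ m ∈ I) := by
    intro I hI
    constructor
    · intro h
      have := h.2 0 h.1 m (Or.inr (le_refl m))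
      simpa using this
    · intro h
      refine ⟨hI.1, ?_⟩
      intro i hi s hs
      rcases hs with hs | hs
      · exact hI.2 i hi s (Or.inl hs)
      · have hs' : m ≤ s := hs
        by_cases h0 : i + s = m
        · rw [h0]; exact h
        · have h1 : m + 1 ≤ i + s := by omega
          have := hI.2 0 hI.1 (i + s) (Or.inr h1)
          simpa using this
  refine ⟨⟨?_, ?_⟩, key⟩
  · intro I hI
    refine ⟨hI.1, ?_⟩
    intro i hi s hs
    rcases hs with hs | hs
    · exact hI.2 i hi s (Or.inl hs)
    · exact hI.2 i hi s (Or.inr (Nat.le_of_succ_le hs))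
  · intro hsub
    have hH : IsNormalizedIdeal (ordinaryNS (m + 1)) (ordinaryNS (m + 1)) := by
      refine ⟨Or.inl rfl, ?_⟩
      intro i hi s hs
      simp only [ordinaryNS, Set.mem_union, Set.mem_singleton_iff, Set.mem_setOf_eq] at *
      omega
    have hm' := (key _ hH).1 (hsub hH)
    simp only [ordinaryNS, Set.mem_union, Set.mem_singleton_iff, Set.mem_setOf_eq] at hm'
    omega
end

section
/- Let S be a numerical semigroup with multiplicity m(S) ≥ 5. Then the poset (𝔑(S), ⪯) is neither a join semilattice nor a meet semilattice: there exist I, J ∈ 𝔑(S) having no supremum with respect to ⪯, and there exist I, J ∈ 𝔑(S) having no infimum with respect to ⪯. -/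
open Pointwise

/-- Truncated sum of subsets of `{0,…,4}`. -/
def tsum5 (A B : Finset (Fin 5)) : Finset (Fin 5) :=
  Finset.univ.filter fun k => ∃ i ∈ A, ∃ j ∈ B, i.val + j.val = k.val

open Classical in
/-- Truncation of a set of naturals to `{0,…,4}`. -/
noncomputable def tr5 (A : Set ℕ) : Finset (Fin 5) := Finset.univ.filter fun i => i.val ∈ A

/-- Extension of a subset of `{0,…,4}` by all `n ≥ 5`. -/
def up5 (F : Finset (Fin 5)) : Set ℕ := {n | 5 ≤ n ∨ ∃ i ∈ F, i.val = n}

lemma mem_tr5 (A : Set ℕ) (i : Fin 5) : i ∈ tr5 A ↔ i.val ∈ A := by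
  simp [tr5]

lemma tr5_up5 (F : Finset (Fin 5)) : tr5 (up5 F) = F := by
  ext i
  simp only [mem_tr5, up5, Set.mem_ofPred_eq]
  constructor
  · rintro (h | ⟨j, hj, h⟩)
    · omega
    · rwa [← Fin.ext h]
  · intro h
    exact Or.inr ⟨i, h, rfl⟩

lemma mem_tsum5 (A B : Finset (Fin 5)) (k : Fin 5) :
    k ∈ tsum5 A B ↔ ∃ i ∈ A, ∃ j ∈ B, i.val + j.val = k.val := by
  unfold tsum5
  exact Finset.mem_filter_univ k

lemma tr5_add (A B : Set ℕ) : tr5 (A + B) = tsum5 (tr5 A) (tr5 B) := by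
  ext k
  simp only [mem_tr5, mem_tsum5, Set.mem_add]
  constructor
  · rintro ⟨a, ha, b, hb, h⟩
    have := k.isLt
    exact ⟨⟨a, by omega⟩, ha, ⟨b, by omega⟩, hb, h⟩
  · rintro ⟨a, ha, b, hb, h⟩
    exact ⟨a, ha, b, hb, h⟩

lemma up5_add (F G : Finset (Fin 5)) (hF : 0 ∈ F) :
    up5 F + up5 G = up5 (tsum5 F G) := by
  ext n
  simp only [up5, mem_tsum5, Set.mem_add,
    Set.mem_ofPred_eq]
  constructor
  · rintro ⟨a, ha, b, hb, h⟩
    by_cases hn : 5 ≤ n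
    · exact Or.inl hn
    · rcases ha with ha | ⟨i, hi, rfl⟩
      · omega
      rcases hb with hb | ⟨j, hj, rfl⟩
      · omega
      exact Or.inr ⟨⟨n, by omega⟩, ⟨i, hi, j, hj, h⟩, rfl⟩
  · rintro (h | ⟨k, ⟨i, hi, j, hj, h⟩, rfl⟩)
    · exact ⟨0, Or.inr ⟨0, hF, rfl⟩, n, Or.inl h, by omega⟩
    · exact ⟨i, Or.inr ⟨i, hi, rfl⟩, j, Or.inr ⟨j, hj, rfl⟩, h⟩

lemma up5_ideal (S : Set ℕ) (h5 : 5 ≤ multNS S) (F : Finset (Fin 5)) (hF : 0 ∈ F) :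
    IsNormalizedIdeal S (up5 F) := by
  refine ⟨Or.inr ⟨0, hF, rfl⟩, fun i hi s hs => ?_⟩
  by_cases h0 : s = 0
  · simpa [h0] using hi
  · have : multNS S ≤ s := Nat.sInf_le ⟨hs, h0⟩
    exact Or.inl (by omega)

lemma preceq_up5 (S : Set ℕ) (h5 : 5 ≤ multNS S) (F G K : Finset (Fin 5)) (hF : 0 ∈ F)
    (hK : 0 ∈ K) (h : tsum5 F K = G) : Preceq S (up5 F) (up5 G) :=
  ⟨up5 K, up5_ideal S h5 K hK, by rw [up5_add F K hF, h]⟩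

lemma tr5_preceq (S A B : Set ℕ) (h : Preceq S A B) :
    ∃ K : Finset (Fin 5), 0 ∈ K ∧ tsum5 (tr5 A) K = tr5 B := by
  obtain ⟨K, hK, h⟩ := h
  refine ⟨tr5 K, ?_, by rw [← h, tr5_add]⟩
  simpa [tr5] using hK.1

set_option maxRecDepth 100000 in
set_option maxHeartbeats 4000000 in
lemma no_mid : ∀ m : Finset (Fin 5),
    (∃ K : Finset (Fin 5), 0 ∈ K ∧ tsum5 {0, 1} K = m) →
    (∃ K : Finset (Fin 5), 0 ∈ K ∧ tsum5 {0, 1, 3} K = m) →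
    (∃ K : Finset (Fin 5), 0 ∈ K ∧ tsum5 m K = {0, 1, 2, 3}) →
    (∃ K : Finset (Fin 5), 0 ∈ K ∧ tsum5 m K = {0, 1, 3, 4}) → False := by
  decide

lemma no_mid_set (S M : Set ℕ) (h1 : Preceq S (up5 {0, 1}) M) (h2 : Preceq S (up5 {0, 1, 3}) M)
    (h3 : Preceq S M (up5 {0, 1, 2, 3})) (h4 : Preceq S M (up5 {0, 1, 3, 4})) : False := by
  have h1 := tr5_preceq _ _ _ h1
  have h2 := tr5_preceq _ _ _ h2
  have h3 := tr5_preceq _ _ _ h3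
  have h4 := tr5_preceq _ _ _ h4
  rw [tr5_up5] at h1 h2 h3 h4
  exact no_mid _ h1 h2 h3 h4

/-- if `m(S) ≥ 5`, then `(𝔑(S), ⪯)` is neither a join semilattice
nor a meet semilattice. -/
theorem not_semilattice_of_five_le_mult (S : Set ℕ) (hS : IsNumericalSemigroup S)
    (h5 : 5 ≤ multNS S) :
    (∃ I J : Set ℕ, IsNormalizedIdeal S I ∧ IsNormalizedIdeal S J ∧
      ¬ ∃ M : Set ℕ, IsSupNI S I J M) ∧
    (∃ I J : Set ℕ, IsNormalizedIdeal S I ∧ IsNormalizedIdeal S J ∧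
      ¬ ∃ M : Set ℕ, IsInfNI S I J M) := by
  have a := preceq_up5 S h5 {0, 1} {0, 1, 2, 3} {0, 2} (by decide) (by decide) (by decide)
  have b := preceq_up5 S h5 {0, 1} {0, 1, 3, 4} {0, 3} (by decide) (by decide) (by decide)
  have c := preceq_up5 S h5 {0, 1, 3} {0, 1, 2, 3} {0, 2} (by decide) (by decide) (by decide)
  have d := preceq_up5 S h5 {0, 1, 3} {0, 1, 3, 4} {0, 3} (by decide) (by decide) (by decide)
  have i1 := up5_ideal S h5 {0, 1} (by decide)
  have i2 := up5_ideal S h5 {0, 1, 3} (by decide)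
  have i3 := up5_ideal S h5 {0, 1, 2, 3} (by decide)
  have i4 := up5_ideal S h5 {0, 1, 3, 4} (by decide)
  refine ⟨⟨_, _, i1, i2, ?_⟩, ⟨_, _, i3, i4, ?_⟩⟩
  · rintro ⟨M, -, h1, h2, h⟩
    exact no_mid_set S M h1 h2 (h _ i3 a c) (h _ i4 b d)
  · rintro ⟨M, -, h1, h2, h⟩
    exact no_mid_set S M (h _ i1 a b) (h _ i2 c d) h1 h2
end

section
/- Let S be a numerical semigroup with multiplicity m such that (𝔑(S), ⪯) is a lattice, and let a be a minimal generator of S with a ≠ m and a > F(S). Then (𝔑(S \ {a}), ⪯) is a lattice as well, i.e., every pair of normalized ideals of S \ {a} has a supremum and an infimum with respect to ⪯. -/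
open Pointwise

namespace NILat

structure Ctx (m a : ℕ) (T I J L K1 K2 M A A2 K : Set ℕ) : Prop where
  hm : 1 ≤ m
  hm4 : m ≤ 4
  iT : IsNormalizedIdeal T T
  hmT : m ∈ T
  hTa : ∀ x, a < x → x ∈ T
  iI : IsNormalizedIdeal T I
  iJ : IsNormalizedIdeal T J
  iL : IsNormalizedIdeal T L
  iK1 : IsNormalizedIdeal T K1
  iK2 : IsNormalizedIdeal T K2
  iM : IsNormalizedIdeal T M
  iA : IsNormalizedIdeal T A
  iA2 : IsNormalizedIdeal T A2
  iK : IsNormalizedIdeal T K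
  haL : a ∉ L
  haM : a ∈ M
  hIK : ∀ i ∈ I, ∀ k ∈ K1, i + k ∈ L
  hIK' : ∀ z ∈ L, ∃ i ∈ I, ∃ k ∈ K1, i + k = z
  hJK : ∀ i ∈ J, ∀ k ∈ K2, i + k ∈ L
  hJK' : ∀ z ∈ L, ∃ i ∈ J, ∃ k ∈ K2, i + k = z
  hIA : ∀ i ∈ I, ∀ k ∈ A, i + k ∈ M
  hIA' : ∀ z ∈ M, z ≠ a → ∃ i ∈ I, ∃ k ∈ A, i + k = z
  hJA : ∀ i ∈ J, ∀ k ∈ A2, i + k ∈ M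
  hJA' : ∀ z ∈ M, z ≠ a → ∃ i ∈ J, ∃ k ∈ A2, i + k = z
  hMK : ∀ x ∈ M, ∀ k ∈ K, x + k ∈ L ∨ x + k = a
  hMK' : ∀ z ∈ L, ∃ x ∈ M, ∃ k ∈ K, x + k = z
  hsup : ∀ z ∈ M, z ≠ a → ∃ i ∈ I, ∃ j ∈ J, i + j = z
  hrem : ∀ u ∈ M, u ∉ I → u ∉ J → u < a →
    (∀ x ∈ M, x ≠ u → ∀ s ∈ T, x + s ≠ u) →
    (∀ z ∈ M, z ≠ u → z = a ∨ ∃ i ∈ I, ∃ k ∈ A, i + k = z ∧ ∀ i' ∈ I, k + i' ≠ u) →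
    (∀ z ∈ M, z ≠ u → z = a ∨ ∃ i ∈ J, ∃ k ∈ A2, i + k = z ∧ ∀ i' ∈ J, k + i' ≠ u) → False

variable {m a : ℕ} {T I J L K1 K2 M A A2 K : Set ℕ}

theorem Ctx.swap (c : Ctx m a T I J L K1 K2 M A A2 K) : Ctx m a T J I L K2 K1 M A2 A K where
  hm := c.hm
  hm4 := c.hm4
  iT := c.iT
  hmT := c.hmT
  hTa := c.hTa
  iI := c.iJ
  iJ := c.iI
  iL := c.iL
  iK1 := c.iK2
  iK2 := c.iK1
  iM := c.iM
  iA := c.iA2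
  iA2 := c.iA
  iK := c.iK
  haL := c.haL
  haM := c.haM
  hIK := c.hJK
  hIK' := c.hJK'
  hJK := c.hIK
  hJK' := c.hIK'
  hIA := c.hJA
  hIA' := c.hJA'
  hJA := c.hIA
  hJA' := c.hIA'
  hMK := c.hMK
  hMK' := c.hMK'
  hsup := fun z hz ha => by
    obtain ⟨i, hi, j, hj, h⟩ := c.hsup z hz ha
    exact ⟨j, hj, i, hi, by omega⟩
  hrem := fun u hu h1 h2 h3 h4 h5 h6 => c.hrem u hu h2 h1 h3 h4 h6 h5

theorem sub_of_ideal {X : Set ℕ} (h : IsNormalizedIdeal T X) {x : ℕ} (hx : x ∈ T) : x ∈ X := by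
  have := h.2 0 h.1 x hx
  simpa using this

theorem Ctx.mulT (c : Ctx m a T I J L K1 K2 M A A2 K) (k : ℕ) : m * k ∈ T := by
  induction k with
  | zero => exact c.iT.1
  | succ k ih => exact c.iT.2 _ ih _ c.hmT

theorem Ctx.zmodT (c : Ctx m a T I J L K1 K2 M A A2 K) {x : ℕ} (h : x % m = 0) : x ∈ T := by
  obtain ⟨k, rfl⟩ := Nat.dvd_of_mod_eq_zero h
  exact c.mulT k

theorem Ctx.up (c : Ctx m a T I J L K1 K2 M A A2 K) {X : Set ℕ} (hX : IsNormalizedIdeal T X)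
    {x y : ℕ} (hx : x ∈ X) (hxy : x ≤ y) (h : y % m = x % m) : y ∈ X := by
  have : (y - x) % m = 0 := Nat.sub_mod_eq_zero_of_mod_eq h
  have := hX.2 x hx _ (c.zmodT this)
  rwa [Nat.add_sub_cancel' hxy] at this

/-- elements of class `a` are at least `a` -/
def Pa (m a : ℕ) (X : Set ℕ) : Prop := ∀ x ∈ X, x % m = a % m → a ≤ x

theorem Ctx.paL' (c : Ctx m a T I J L K1 K2 M A A2 K) {x : ℕ} (hx : x ∈ L) (h : x % m = a % m) :
    a < x := by
  by_contra hlt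
  exact c.haL (c.up c.iL hx (by omega) h.symm)

theorem Ctx.paL (c : Ctx m a T I J L K1 K2 M A A2 K) : Pa m a L :=
  fun _ hx h => (c.paL' hx h).le

theorem Ctx.IL (c : Ctx m a T I J L K1 K2 M A A2 K) {x : ℕ} (hx : x ∈ I) : x ∈ L := by
  simpa using c.hIK x hx 0 c.iK1.1
theorem Ctx.K1L (c : Ctx m a T I J L K1 K2 M A A2 K) {x : ℕ} (hx : x ∈ K1) : x ∈ L := by
  simpa using c.hIK 0 c.iI.1 x hx
theorem Ctx.ML (c : Ctx m a T I J L K1 K2 M A A2 K) {x : ℕ} (hx : x ∈ M) (h : x ≠ a) : x ∈ L := by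
  have := c.hMK x hx 0 c.iK.1
  simpa [h] using this
theorem Ctx.KL (c : Ctx m a T I J L K1 K2 M A A2 K) {x : ℕ} (hx : x ∈ K) (h : x ≠ a) : x ∈ L := by
  have := c.hMK 0 c.iM.1 x hx
  simpa [h] using this
theorem Ctx.IM (c : Ctx m a T I J L K1 K2 M A A2 K) {x : ℕ} (hx : x ∈ I) : x ∈ M := by
  simpa using c.hIA x hx 0 c.iA.1
theorem Ctx.AM (c : Ctx m a T I J L K1 K2 M A A2 K) {x : ℕ} (hx : x ∈ A) : x ∈ M := by
  simpa using c.hIA 0 c.iI.1 x hx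

theorem Ctx.paI (c : Ctx m a T I J L K1 K2 M A A2 K) : Pa m a I := fun x hx => c.paL x (c.IL hx)
theorem Ctx.paJ (c : Ctx m a T I J L K1 K2 M A A2 K) : Pa m a J := c.swap.paI
theorem Ctx.paK1 (c : Ctx m a T I J L K1 K2 M A A2 K) : Pa m a K1 := fun x hx => c.paL x (c.K1L hx)
theorem Ctx.paK2 (c : Ctx m a T I J L K1 K2 M A A2 K) : Pa m a K2 := c.swap.paK1
theorem Ctx.paM (c : Ctx m a T I J L K1 K2 M A A2 K) : Pa m a M := fun x hx h => by
  by_cases hxa : x = a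
  · omega
  · exact c.paL x (c.ML hx hxa) h
theorem Ctx.paK (c : Ctx m a T I J L K1 K2 M A A2 K) : Pa m a K := fun x hx h => by
  by_cases hxa : x = a
  · omega
  · exact c.paL x (c.KL hx hxa) h
theorem Ctx.paA (c : Ctx m a T I J L K1 K2 M A A2 K) : Pa m a A := fun x hx => c.paM x (c.AM hx)

def Good (m a z : ℕ) : Prop := ∀ p q : ℕ, (p + q) % m = z % m →
  p % m = 0 ∨ q % m = 0 ∨ p % m = a % m ∨ q % m = a % m

theorem Ctx.split (c : Ctx m a T I J L K1 K2 M A A2 K) {X Y : Set ℕ}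
    (hX : IsNormalizedIdeal T X) (hY : IsNormalizedIdeal T Y) (pX : Pa m a X) (pY : Pa m a Y)
    {z p q : ℕ} (hz : z % m ≠ a % m) (hp : p ∈ X) (hq : q ∈ Y) (h : p + q = z) :
    z ∈ X ∨ z ∈ Y ∨ (p % m ≠ 0 ∧ q % m ≠ 0 ∧ p % m ≠ a % m ∧ q % m ≠ a % m) := by
  have hza : z ≠ a := by rintro rfl; exact hz rfl
  by_cases h1 : p % m = 0
  · right; left
    have := hY.2 q hq p (c.zmodT h1)
    rwa [add_comm, h] at this
  by_cases h2 : q % m = 0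
  · left
    have := hX.2 p hp q (c.zmodT h2)
    rwa [h] at this
  by_cases h3 : p % m = a % m
  · have := pX p hp h3
    left; exact sub_of_ideal hX (c.hTa z (by omega))
  by_cases h4 : q % m = a % m
  · have := pY q hq h4
    left; exact sub_of_ideal hX (c.hTa z (by omega))
  tauto

theorem Ctx.splitG (c : Ctx m a T I J L K1 K2 M A A2 K) {X Y : Set ℕ}
    (hX : IsNormalizedIdeal T X) (hY : IsNormalizedIdeal T Y) (pX : Pa m a X) (pY : Pa m a Y)
    {z p q : ℕ} (hz : z % m ≠ a % m) (hg : Good m a z) (hp : p ∈ X) (hq : q ∈ Y) (h : p + q = z) :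
    z ∈ X ∨ z ∈ Y := by
  have := hg p q (by rw [h])
  have := c.split hX hY pX pY hz hp hq h
  tauto

theorem class_dich (hm : 1 ≤ m) (hm4 : m ≤ 4) (ha0 : a % m ≠ 0) {z : ℕ} (h0 : z % m ≠ 0) (ha : z % m ≠ a % m) :
    Good m a z ∨ (m = 4 ∧ a % 2 = 1 ∧ z % 4 = 2) := by
  by_cases hb : m = 4 ∧ a % 2 = 1 ∧ z % 4 = 2
  · exact Or.inr hb
  · left
    intro p q h
    interval_cases m <;> omega


theorem Ctx.ha0 (c : Ctx m a T I J L K1 K2 M A A2 K) : a % m ≠ 0 := fun h =>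
  c.haL (sub_of_ideal c.iL (c.zmodT h))

theorem Ctx.exmin (c : Ctx 4 a T I J L K1 K2 M A A2 K) {X : Set ℕ} (hX : IsNormalizedIdeal T X)
    (r : ℕ) : ∃ y ∈ X, y % 4 = r % 4 ∧ ∀ x ∈ X, x % 4 = r % 4 → y ≤ x := by
  classical
  have h : ∃ y, y ∈ X ∧ y % 4 = r % 4 :=
    ⟨4 * (a + 1) + r, sub_of_ideal hX (c.hTa _ (by omega)), by omega⟩
  refine ⟨Nat.find h, (Nat.find_spec h).1, (Nat.find_spec h).2, fun x hx hr => ?_⟩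
  exact Nat.find_min' h ⟨hx, hr⟩

theorem good3 (ha : a % 2 = 1) {z : ℕ} (hz : z % 4 = (3 * a) % 4) : Good 4 a z := by
  intro p q h
  have : a % 4 = 1 ∨ a % 4 = 3 := by omega
  have h1 : p % 4 < 4 := Nat.mod_lt _ (by norm_num)
  have h2 : q % 4 < 4 := Nat.mod_lt _ (by norm_num)
  rcases this with h' | h' <;> interval_cases h3 : p % 4 <;> omega

/-- splitting in class 2 -/
theorem Ctx.split2 (c : Ctx 4 a T I J L K1 K2 M A A2 K) (ha : a % 2 = 1) {X Y : Set ℕ}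
    (hX : IsNormalizedIdeal T X) (hY : IsNormalizedIdeal T Y) (pX : Pa 4 a X) (pY : Pa 4 a Y)
    {z p q : ℕ} (hz : z % 4 = 2) (hp : p ∈ X) (hq : q ∈ Y) (h : p + q = z) :
    z ∈ X ∨ z ∈ Y ∨ (p % 4 = (3 * a) % 4 ∧ q % 4 = (3 * a) % 4) := by
  rcases c.split hX hY pX pY (by omega) hp hq h with h1 | h1 | h1
  · exact Or.inl h1
  · exact Or.inr (Or.inl h1)
  · right; right; omega

/-- splitting in class 3a -/
theorem Ctx.split3 (c : Ctx 4 a T I J L K1 K2 M A A2 K) (ha : a % 2 = 1) {X Y : Set ℕ}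
    (hX : IsNormalizedIdeal T X) (hY : IsNormalizedIdeal T Y) (pX : Pa 4 a X) (pY : Pa 4 a Y)
    {z p q : ℕ} (hz : z % 4 = (3 * a) % 4) (hp : p ∈ X) (hq : q ∈ Y) (h : p + q = z) :
    z ∈ X ∨ z ∈ Y :=
  c.splitG hX hY pX pY (by omega) (good3 ha hz) hp hq h

/-- the half of the removal lemma -/
theorem Ctx.rem_half (c : Ctx 4 a T I J L K1 K2 M A A2 K) (ha : a % 2 = 1) {u : ℕ} (hu : u ∈ M)
    (hu2 : u % 4 = 2) (hua : u < a) (hmin : ∀ x ∈ M, x % 4 = 2 → u ≤ x) (huI : u ∉ I)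
    (h3I : ∀ x ∈ M, x % 4 = (3 * a) % 4 → x ∈ I) :
    ∀ z ∈ M, z ≠ u → z = a ∨ ∃ i ∈ I, ∃ k ∈ A, i + k = z ∧ ∀ i' ∈ I, k + i' ≠ u := by
  intro z hz hzu
  by_cases hza : z = a
  · exact Or.inl hza
  right
  by_cases hzI : z ∈ I
  · refine ⟨z, hzI, 0, c.iA.1, by simp, fun i' hi' h => huI ?_⟩
    rwa [← h, zero_add]
  have hz2 : z % 4 = 2 := by
    by_contra h2
    apply hzI
    by_cases h0 : z % 4 = 0
    · exact sub_of_ideal c.iI (c.zmodT h0)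
    by_cases h1 : z % 4 = a % 4
    · have := c.paM z hz h1
      exact sub_of_ideal c.iI (c.hTa _ (by omega))
    exact h3I z hz (by omega)
  have hlt := hmin z hz hz2
  obtain ⟨i, hi, k, hk, hik⟩ := c.hIA' u hu (by omega)
  refine ⟨i, hi, k + (z - u), c.up c.iA hk (by omega) (by omega), by omega, fun i' hi' h => ?_⟩
  have h1 := c.hIA i' hi' k hk
  have := hmin _ h1 (by omega)
  omega

theorem Ctx.removal (c : Ctx 4 a T I J L K1 K2 M A A2 K) (ha : a % 2 = 1) {u : ℕ} (hu : u ∈ M)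
    (hu2 : u % 4 = 2) (hmin : ∀ x ∈ M, x % 4 = 2 → u ≤ x) (huI : u ∉ I) (huJ : u ∉ J)
    (h3I : ∀ x ∈ M, x % 4 = (3 * a) % 4 → x ∈ I)
    (h3J : ∀ x ∈ M, x % 4 = (3 * a) % 4 → x ∈ J) : False := by
  have hua : u < a := by
    by_contra h
    exact huI (sub_of_ideal c.iI (c.hTa _ (by omega)))
  refine c.hrem u hu huI huJ hua ?_ (c.rem_half ha hu hu2 hua hmin huI h3I)
    (c.swap.rem_half ha hu hu2 hua hmin huJ h3J)
  intro x hx hxu s hs h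
  have hsI : s ∈ I := sub_of_ideal c.iI hs
  rcases c.split2 ha c.iM c.iI c.paM c.paI hu2 hx hsI h with h1 | h1 | h1
  · by_cases h2 : x % 4 = 2
    · have := hmin x hx h2
      omega
    by_cases h0 : x % 4 = 0
    · apply huI
      rw [← h]
      exact sub_of_ideal c.iI (c.iT.2 _ (c.zmodT h0) _ hs)
    by_cases h3 : x % 4 = a % 4
    · have := c.paM x hx h3
      omega
    apply huI
    rw [← h]
    exact c.iI.2 _ (h3I x hx (by omega)) _ hs
  · exact huI h1
  · apply huI
    rw [← h]
    exact c.iI.2 _ (h3I x hx h1.1) _ hs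

/-- half of lemma X -/
theorem Ctx.X_half (c : Ctx 4 a T I J L K1 K2 M A A2 K) (ha : a % 2 = 1) {z u y y2 : ℕ}
    (hzu : z + u = a) (hz3 : z % 4 = (3 * a) % 4) (hu2 : u % 4 = 2)
    (hzmin : ∀ x ∈ L, x % 4 = (3 * a) % 4 → z ≤ x) (hzK : z ∈ K1)
    (huJ : u ∉ J) (hy : y ∈ I) (hy3 : y % 4 = (3 * a) % 4)
    (hy2 : y2 ∈ J) (hy23 : y2 % 4 = (3 * a) % 4)
    (hy2min : ∀ x ∈ J, x % 4 = (3 * a) % 4 → y2 ≤ x)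
    (hzy2 : z < y2) (hle : y + y2 ≤ u) : y2 ≤ y := by
  have h1 : y + z ∈ L := c.hIK y hy z hzK
  obtain ⟨j, hj, k, hk, hjk⟩ := c.hJK' _ h1
  rcases c.split2 ha c.iJ c.iK2 c.paJ c.paK2 (by omega) hj hk hjk with h | h | h
  · exact absurd (c.up c.iJ h (by omega) (by omega)) huJ
  · have h2 := c.hJK y2 hy2 _ h
    have := c.paL' h2 (by omega)
    omega
  · have h3 := hzmin k (c.swap.K1L hk) h.2
    have h4 := hy2min j hj h.1
    omega

theorem Ctx.X (c : Ctx 4 a T I J L K1 K2 M A A2 K) (ha : a % 2 = 1) {z n : ℕ}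
    (hz : z ∈ L) (hzM : z ∉ M) (hn : n ∈ M) (hn2 : n % 4 = 2) (hzn : z + n = a) : False := by
  have hz3 : z % 4 = (3 * a) % 4 := by omega
  have inK : ∀ x ∈ L, x % 4 = (3 * a) % 4 → x ∉ M → x ∈ K := by
    intro x hx hx3 hxM
    obtain ⟨p, hp, k, hk, hpk⟩ := c.hMK' x hx
    have := c.split3 ha c.iM c.iK c.paM c.paK hx3 hp hk hpk
    tauto
  have sumge : ∀ x ∈ M, ∀ k ∈ K, (x + k) % 4 = a % 4 → a ≤ x + k := by
    intro x hx k hk h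
    rcases c.hMK x hx k hk with h1 | h1
    · exact c.paL _ h1 h
    · omega
  have hnmin : ∀ x ∈ M, x % 4 = 2 → n ≤ x := by
    intro x hx hx2
    have := sumge x hx z (inK z hz hz3 hzM) (by omega)
    omega
  have hzmin : ∀ x ∈ L, x % 4 = (3 * a) % 4 → z ≤ x := by
    intro x hx hx3
    by_contra hlt
    have hxM : x ∉ M := fun h => hzM (c.up c.iM h (by omega) (by omega))
    have := sumge n hn x (inK x hx hx3 hxM) (by omega)
    omega
  have inK1 : ∀ {J I K2 K1 A2 A : Set ℕ} (_ : Ctx 4 a T I J L K1 K2 M A A2 K), z ∈ K1 ∧ n ∉ I := by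
    intro J I K2 K1 A2 A c
    have h1 : z ∈ K1 := by
      obtain ⟨p, hp, k, hk, hpk⟩ := c.hIK' z hz
      rcases c.split3 ha c.iI c.iK1 c.paI c.paK1 hz3 hp hk hpk with h | h
      · exact absurd (c.IM h) hzM
      · exact h
    refine ⟨h1, fun h => ?_⟩
    have := c.paL' (c.hIK n h z h1) (by omega)
    omega
  obtain ⟨hzK1, hnI⟩ := inK1 c
  obtain ⟨hzK2, hnJ⟩ := inK1 c.swap
  obtain ⟨y, hy, hy3, hymin⟩ := c.exmin c.iI (3 * a)
  obtain ⟨y2, hy2, hy23, hy2min⟩ := c.exmin c.iJ (3 * a)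
  have hzy : z < y := by
    by_contra h
    exact hzM (c.up c.iM (c.IM hy) (by omega) (by omega))
  have hzy2 : z < y2 := by
    by_contra h
    exact hzM (c.up c.iM (c.swap.IM hy2) (by omega) (by omega))
  have hle : y + y2 ≤ n := by
    obtain ⟨i, hi, j, hj, hij⟩ := c.hsup n hn (by omega)
    rcases c.split2 ha c.iI c.iJ c.paI c.paJ hn2 hi hj hij with h | h | h
    · exact absurd h hnI
    · exact absurd h hnJ
    · have := hymin i hi h.1
      have := hy2min j hj h.2
      omega
  have e1 := c.X_half ha hzn hz3 hn2 hzmin hzK1 hnJ hy hy3 hy2 hy23 hy2min hzy2 hle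
  have e2 := c.swap.X_half ha hzn hz3 hn2 hzmin hzK2 hnI hy2 hy23 hy hy3 hymin hzy (by omega)
  have hIJ : ∀ x ∈ M, x % 4 = (3 * a) % 4 → x ∈ I ∨ x ∈ J := by
    intro x hx hx3
    obtain ⟨i, hi, j, hj, hij⟩ := c.hsup x hx (by omega)
    exact c.split3 ha c.iI c.iJ c.paI c.paJ hx3 hi hj hij
  have hge : ∀ x ∈ M, x % 4 = (3 * a) % 4 → y ≤ x := by
    intro x hx hx3
    rcases hIJ x hx hx3 with h | h
    · exact hymin x h hx3
    · have := hy2min x h hx3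
      omega
  refine c.removal ha hn hn2 hnmin hnI hnJ ?_ ?_
  · intro x hx hx3
    have := hge x hx hx3
    exact c.up c.iI hy (by omega) (by omega)
  · intro x hx hx3
    have := hge x hx hx3
    exact c.up c.iJ hy2 (by omega) (by omega)

/-- lemma Y: minimal `u` in class 2 of `L`, minimal `y` in class 3a of `M`, lying in `I`. -/
theorem Ctx.Y (c : Ctx 4 a T I J L K1 K2 M A A2 K) (ha : a % 2 = 1) {u y : ℕ}
    (hu : u ∈ L) (hu2 : u % 4 = 2) (huM : u ∉ M) (humin : ∀ x ∈ L, x % 4 = 2 → u ≤ x)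
    (hy : y ∈ I) (hy3 : y % 4 = (3 * a) % 4) (hymin : ∀ x ∈ M, x % 4 = (3 * a) % 4 → y ≤ x) :
    ∃ n ∈ M, n ≠ a ∧ ∃ b, n + b = u ∧ ∀ n' ∈ M, n' ≠ a → b + n' ∈ L := by
  have huI : u ∉ I := fun h => huM (c.IM h)
  have hua : u < a := by
    by_contra h
    exact huM (sub_of_ideal c.iM (c.hTa _ (by omega)))
  have big : ∀ x, a < x → x ∈ L := fun x hx => sub_of_ideal c.iL (c.hTa _ hx)
  by_cases huy : a < u + y
  · refine ⟨0, c.iM.1, by omega, u, by simp, fun n hn hna => ?_⟩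
    by_cases h0 : n % 4 = 0
    · exact c.iL.2 u hu n (c.zmodT h0)
    by_cases h1 : n % 4 = a % 4
    · have := c.paM n hn h1
      exact big _ (by omega)
    by_cases h2 : n % 4 = 2
    · exact sub_of_ideal c.iL (c.zmodT (by omega))
    have := hymin n hn (by omega)
    exact big _ (by omega)
  obtain ⟨i, hi, k, hk, hik⟩ := c.hIK' u hu
  rcases c.split2 ha c.iI c.iK1 c.paI c.paK1 hu2 hi hk hik with h | h | h
  · exact absurd h huI
  · exact absurd (c.paL' (c.hIK y hy u h) (by omega)) (by omega)
  have hiy := hymin i (c.IM hi) h.1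
  -- make the first summand minimal
  obtain ⟨k, rfl⟩ : ∃ k', k' = k + (i - y) := ⟨_, rfl⟩
  generalize hk' : k + (i - y) = k' at *
  have hkK : k' ∈ K1 := c.up c.iK1 hk (by omega) (by omega)
  have hkL : k' ∈ L := c.K1L hkK
  have hk3 : k' % 4 = (3 * a) % 4 := by omega
  have hyk : y + k' = u := by omega
  clear hk' hik h hiy hk hi
  refine ⟨y, c.IM hy, by omega, k', hyk, fun n hn hna => ?_⟩
  by_cases h0 : n % 4 = 0
  · exact c.iL.2 _ hkL n (c.zmodT h0)
  by_cases h1 : n % 4 = a % 4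
  · have := c.paM n hn h1
    exact big _ (by omega)
  by_cases h2 : n % 4 = 2
  swap
  · have := hymin n hn (by omega)
    exact c.up c.iL hu (by omega) (by omega)
  apply big
  by_contra hle
  -- main contradiction
  have sumge : ∀ x ∈ M, ∀ k ∈ K, (x + k) % 4 = a % 4 → a ≤ x + k := by
    intro x hx k hk h
    rcases c.hMK x hx k hk with h1 | h1
    · exact c.paL _ h1 h
    · omega
  have Mgt : ∀ x ∈ M, x % 4 = 2 → u < x := by
    intro x hx hx2
    by_contra hlt
    exact huM (c.up c.iM hx (by omega) (by omega))
  have hun := Mgt n hn h2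
  have noLM : ∀ x ∈ L, x % 4 = (3 * a) % 4 → x ≤ k' → x ∈ M := by
    intro x hx hx3 hxk
    by_contra hxM
    have hxlt : x < y := by
      by_contra h
      exact hxM (c.up c.iM (c.IM hy) (by omega) (by omega))
    obtain ⟨p, hp, q, hq, hpq⟩ := c.hMK' x hx
    rcases c.split3 ha c.iM c.iK c.paM c.paK hx3 hp hq hpq with h | h
    · exact hxM h
    · have hyx : y + x ∈ L := by
        rcases c.hMK y (c.IM hy) x h with h | h
        · exact h
        · omega
      have := humin _ hyx (by omega)
      have hxk : x = k' := by omega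
      subst hxk
      -- k' ∉ M : use lemma X
      have := sumge n hn x h (by omega)
      exact c.X ha hx hxM hn h2 (by omega)
  have hkM : k' ∈ M := noLM k' hkL hk3 le_rfl
  have hyk' := hymin k' hkM hk3
  have hkK' : k' ∈ K := by
    obtain ⟨p, hp, q, hq, hpq⟩ := c.hMK' u hu
    rcases c.split2 ha c.iM c.iK c.paM c.paK hu2 hp hq hpq with h | h | h
    · exact absurd h huM
    · have := sumge y (c.IM hy) u h (by omega)
      omega
    · have := hymin p hp h.1
      exact c.up c.iK hq (by omega) (by omega)
  have hnk : n + k' = a := by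
    have := sumge n hn k' hkK' (by omega)
    omega
  have hnmin : ∀ x ∈ M, x % 4 = 2 → n ≤ x := by
    intro x hx hx2
    have := sumge x hx k' hkK' (by omega)
    omega
  have hnI : n ∉ I := by
    intro h
    have := c.paL' (c.hIK n h k' hkK) (by omega)
    omega
  obtain ⟨y2, hy2, hy23, hy2min⟩ := c.exmin c.iJ (3 * a)
  have hyy2 := hymin y2 (c.swap.IM hy2) hy23
  have huJ : u ∉ J := fun h => huM (c.swap.IM h)
  obtain ⟨j, hj, q, hq, hjq⟩ := c.hJK' u hu
  have hj' := c.split2 ha c.iJ c.iK2 c.paJ c.paK2 hu2 hj hq hjq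
  rcases hyy2.eq_or_lt with he | hlt
  · have hkK2 : k' ∈ K2 := by
      rcases hj' with h | h | h
      · exact absurd h huJ
      · have := c.paL' (c.hJK y2 hy2 u h) (by omega)
        omega
      · have := hy2min j hj h.1
        exact c.up c.iK2 hq (by omega) (by omega)
    have hnJ : n ∉ J := by
      intro h
      have := c.paL' (c.hJK n h k' hkK2) (by omega)
      omega
    refine c.removal ha hn h2 hnmin hnI hnJ ?_ ?_
    · intro x hx hx3
      exact c.up c.iI hy (hymin x hx hx3) (by omega)
    · intro x hx hx3
      exact c.up c.iJ hy2 (he ▸ hymin x hx hx3) (by omega)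
  · have hyJ : y ∉ J := fun h => absurd (hy2min y h hy3) (by omega)
    have hyy2M : y2 + y ∈ M := by
      obtain ⟨p, hp, q, hq, hpq⟩ := c.hJA' y (c.IM hy) (by omega)
      rcases c.split3 ha c.iJ c.iA2 c.paJ c.swap.paA hy3 hp hq hpq with h | h
      · exact absurd h hyJ
      · exact c.hJA y2 hy2 y h
    have h5 := Mgt _ hyy2M (by omega)
    have huK2 : a < y2 + u := by
      rcases hj' with h | h | h
      · exact absurd h huJ
      · exact c.paL' (c.hJK y2 hy2 u h) (by omega)
      · have h6 := hy2min j hj h.1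
        have h7 := hymin q (noLM q (c.swap.K1L hq) h.2 (by omega)) h.2
        omega
    obtain ⟨i, hi, j, hj, hij⟩ := c.hsup n hn hna
    rcases c.split2 ha c.iI c.iJ c.paI c.paJ h2 hi hj hij with h | h | h
    · exact hnI h
    · obtain ⟨p, hp, q, hq, hpq⟩ := c.hJK' y (c.IL hy)
      rcases c.split3 ha c.iJ c.iK2 c.paJ c.paK2 hy3 hp hq hpq with h' | h'
      · exact hyJ h'
      · have := c.paL' (c.hJK n h y h') (by omega)
        omega
    · have := hymin i (c.IM hi) h.1
      have := hy2min j hj h.2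
      omega

theorem Ctx.core2 (c : Ctx m a T I J L K1 K2 M A A2 K) : ∀ z ∈ L,
    ∃ n ∈ M, n ≠ a ∧ ∃ b, n + b = z ∧ ∀ n' ∈ M, n' ≠ a → b + n' ∈ L := by
  intro z hz
  have hza : z ≠ a := fun h => c.haL (h ▸ hz)
  by_cases hzM : z ∈ M
  · refine ⟨z, hzM, hza, 0, by simp, fun n hn hna => ?_⟩
    rw [zero_add]
    exact c.ML hn hna
  have h0 : z % m ≠ 0 := fun h => hzM (sub_of_ideal c.iM (c.zmodT h))
  have h1 : z % m ≠ a % m := fun h =>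
    hzM (sub_of_ideal c.iM (c.hTa _ (c.paL' hz h)))
  have ha0 : a ≠ 0 := by
    rintro rfl
    exact c.ha0 (by simp)
  rcases class_dich c.hm c.hm4 c.ha0 h0 h1 with hg | ⟨rfl, ha, hz2⟩
  · have hzK : z ∈ K := by
      obtain ⟨p, hp, q, hq, hpq⟩ := c.hMK' z hz
      have := c.splitG c.iM c.iK c.paM c.paK h1 hg hp hq hpq
      tauto
    have hzK1 : z ∈ K1 := by
      obtain ⟨p, hp, q, hq, hpq⟩ := c.hIK' z hz
      rcases c.splitG c.iI c.iK1 c.paI c.paK1 h1 hg hp hq hpq with h | h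
      · exact absurd (c.IM h) hzM
      · exact h
    have hzK2 : z ∈ K2 := by
      obtain ⟨p, hp, q, hq, hpq⟩ := c.hJK' z hz
      rcases c.splitG c.iJ c.iK2 c.paJ c.paK2 h1 hg hp hq hpq with h | h
      · exact absurd (c.swap.IM h) hzM
      · exact h
    refine ⟨0, c.iM.1, Ne.symm ha0, z, by simp, fun n hn hna => ?_⟩
    rcases c.hMK n hn z hzK with h | h
    · rwa [add_comm]
    exfalso
    have hnI : n ∉ I := fun hI => c.haL (h ▸ c.hIK n hI z hzK1)
    have hnJ : n ∉ J := fun hI => c.haL (h ▸ c.hJK n hI z hzK2)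
    have n0 : n % m ≠ 0 := fun h => hnI (sub_of_ideal c.iI (c.zmodT h))
    have n1 : n % m ≠ a % m := by
      intro h'
      have := c.paM n hn h'
      exact hnI (sub_of_ideal c.iI (c.hTa _ (by omega)))
    rcases class_dich c.hm c.hm4 c.ha0 n0 n1 with hg' | ⟨rfl, ha, hn2⟩
    · obtain ⟨i, hi, j, hj, hij⟩ := c.hsup n hn hna
      have := c.splitG c.iI c.iJ c.paI c.paJ n1 hg' hi hj hij
      tauto
    · exact c.X ha hz hzM hn hn2 (by omega)
  · obtain ⟨u, hu, hu2, humin⟩ := c.exmin c.iL 2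
    have hu2' : u % 4 = 2 := hu2
    have huz := humin z hz hz2
    have huM : u ∉ M := fun h => hzM (c.up c.iM h huz (by omega))
    obtain ⟨y, hy, hy3, hymin⟩ := c.exmin c.iM (3 * a)
    have key : ∃ n ∈ M, n ≠ a ∧ ∃ b, n + b = u ∧ ∀ n' ∈ M, n' ≠ a → b + n' ∈ L := by
      obtain ⟨i, hi, j, hj, hij⟩ := c.hsup y hy (by omega)
      rcases c.split3 ha c.iI c.iJ c.paI c.paJ hy3 hi hj hij with h | h
      · exact c.Y ha hu hu2' huM humin h hy3 hymin
      · exact c.swap.Y ha hu hu2' huM humin h hy3 hymin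
    obtain ⟨n, hn, hna, b, hnb, hb⟩ := key
    refine ⟨n, hn, hna, b + (z - u), by omega, fun n' hn' hna' => ?_⟩
    exact c.up c.iL (hb n' hn' hna') (by omega) (by omega)

theorem Ctx.core1 (c : Ctx m a T I J L K1 K2 M A A2 K) : ∀ z ∈ M, z ≠ a →
    ∃ i ∈ I, ∃ b, i + b = z ∧ ∀ i' ∈ I, b + i' ∈ M ∧ b + i' ≠ a := by
  intro z hz hza
  have haI : a ∉ I := fun h => c.haL (c.IL h)
  by_cases hzI : z ∈ I
  · refine ⟨z, hzI, 0, by simp, fun n hn => ?_⟩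
    rw [zero_add]
    exact ⟨c.IM hn, fun h => haI (h ▸ hn)⟩
  have hzL : z ∈ L := c.ML hz hza
  have h0 : z % m ≠ 0 := fun h => hzI (sub_of_ideal c.iI (c.zmodT h))
  have h1 : z % m ≠ a % m := fun h =>
    hzI (sub_of_ideal c.iI (c.hTa _ (c.paL' hzL h)))
  rcases class_dich c.hm c.hm4 c.ha0 h0 h1 with hg | ⟨rfl, ha, hz2⟩
  · have hzA : z ∈ A := by
      obtain ⟨p, hp, q, hq, hpq⟩ := c.hIA' z hz hza
      have := c.splitG c.iI c.iA c.paI c.paA h1 hg hp hq hpq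
      tauto
    have hzK1 : z ∈ K1 := by
      obtain ⟨p, hp, q, hq, hpq⟩ := c.hIK' z hzL
      have := c.splitG c.iI c.iK1 c.paI c.paK1 h1 hg hp hq hpq
      tauto
    refine ⟨0, c.iI.1, z, by simp, fun n hn => ?_⟩
    rw [add_comm]
    exact ⟨c.hIA n hn z hzA, fun h => c.haL (h ▸ c.hIK n hn z hzK1)⟩
  have bigM : ∀ x, a < x → x ∈ M := fun x hx => sub_of_ideal c.iM (c.hTa _ hx)
  obtain ⟨y, hy, hy3, hymin⟩ := c.exmin c.iI (3 * a)
  have hzlt : z < a := by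
    by_contra h
    exact hzI (sub_of_ideal c.iI (c.hTa _ (by omega)))
  by_cases hyz : a < y + z
  · refine ⟨0, c.iI.1, z, by simp, fun n hn => ?_⟩
    by_cases h0 : n % 4 = 0
    · exact ⟨c.iM.2 z hz n (c.zmodT h0), by omega⟩
    by_cases h1 : n % 4 = a % 4
    · have := c.paL' (c.IL hn) h1
      exact ⟨bigM _ (by omega), by omega⟩
    by_cases h2 : n % 4 = 2
    · exact ⟨sub_of_ideal c.iM (c.zmodT (by omega)), by omega⟩
    have := hymin n hn (by omega)
    exact ⟨bigM _ (by omega), by omega⟩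
  have nK1 : ∀ x ∈ K1, x % 4 = 2 → z < x := by
    intro x hx hx2
    have := c.paL' (c.hIK y hy x hx) (by omega)
    omega
  obtain ⟨k, hk, hk3, hkmin⟩ := c.exmin c.iK1 (3 * a)
  have low : ∀ x ∈ L, x % 4 = 2 → x ≤ z → y + k ≤ x := by
    intro x hx hx2 hxz
    obtain ⟨p, hp, q, hq, hpq⟩ := c.hIK' x hx
    rcases c.split2 ha c.iI c.iK1 c.paI c.paK1 hx2 hp hq hpq with h | h | h
    · exact absurd (c.up c.iI h hxz (by omega)) hzI
    · have := nK1 x h hx2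
      omega
    · have := hymin p hp h.1
      have := hkmin q hq h.2
      omega
  have hykz := low z hzL hz2 le_rfl
  have hkL : k ∈ L := c.K1L hk
  have hbM : z - y ∈ M := by
    by_contra hbM
    have hkM : k ∉ M := fun h => hbM (c.up c.iM h (by omega) (by omega))
    have hkK : k ∈ K := by
      obtain ⟨p, hp, q, hq, hpq⟩ := c.hMK' k hkL
      have := c.split3 ha c.iM c.iK c.paM c.paK hk3 hp hq hpq
      tauto
    have hge : ∀ x ∈ M, x % 4 = (3 * a) % 4 → y ≤ x := by
      intro x hx hx3
      by_contra hlt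
      rcases c.hMK x hx k hkK with h | h
      · have := low _ h (by omega) (by omega)
        omega
      · omega
    have hby : z - y < y := by
      by_contra h
      exact hbM (c.up c.iM (c.IM hy) (by omega) (by omega))
    have hzJ : z ∈ J := by
      obtain ⟨i, hi, j, hj, hij⟩ := c.hsup z hz hza
      rcases c.split2 ha c.iI c.iJ c.paI c.paJ hz2 hi hj hij with h | h | h
      · exact absurd h hzI
      · exact h
      · have := hge i (c.IM hi) h.1
        have := hge j (c.swap.IM hj) h.2
        omega
    obtain ⟨p, hp, q, hq, hpq⟩ := c.hJK' k hkL
    rcases c.split3 ha c.iJ c.iK2 c.paJ c.paK2 hk3 hp hq hpq with h | h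
    · exact hkM (c.swap.IM h)
    · have := c.paL' (c.hJK z hzJ k h) (by omega)
      omega
  have hbK1 : z - y ∈ K1 := c.up c.iK1 hk (by omega) (by omega)
  refine ⟨y, hy, z - y, by omega, fun n hn => ?_⟩
  have hL : z - y + n ∈ L := by
    rw [add_comm]
    exact c.hIK n hn _ hbK1
  refine ⟨?_, fun h => c.haL (h ▸ hL)⟩
  by_cases h0 : n % 4 = 0
  · exact c.iM.2 _ hbM n (c.zmodT h0)
  by_cases h1 : n % 4 = a % 4
  · have := c.paL' (c.IL hn) h1
    exact bigM _ (by omega)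
  by_cases h2 : n % 4 = 2
  · exact bigM _ (c.paL' hL (by omega))
  have := hymin n hn (by omega)
  exact c.up c.iM hz (by omega) (by omega)

theorem not_lattice_of_five {S : Set ℕ} (h5 : ∀ x ∈ S, x ≠ 0 → 5 ≤ x) (h : NILattice S) : False := by
  have mk : ∀ X : Set ℕ, 0 ∈ X → (∀ x, 5 ≤ x → x ∈ X) → IsNormalizedIdeal S X := by
    intro X h0 hX
    refine ⟨h0, fun i hi s hs => ?_⟩
    by_cases hs0 : s = 0
    · simpa [hs0] using hi
    · exact hX _ (by have := h5 s hs hs0; omega)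
  let I : Set ℕ := {x | x = 0 ∨ x = 1 ∨ 5 ≤ x}
  let J : Set ℕ := {x | x = 0 ∨ x = 1 ∨ x = 3 ∨ 5 ≤ x}
  let L1 : Set ℕ := {x | x = 0 ∨ x = 1 ∨ x = 2 ∨ x = 3 ∨ 5 ≤ x}
  let L2 : Set ℕ := {x | x = 0 ∨ x = 1 ∨ x = 3 ∨ x = 4 ∨ 5 ≤ x}
  let P2 : Set ℕ := {x | x = 0 ∨ x = 2 ∨ 5 ≤ x}
  let P3 : Set ℕ := {x | x = 0 ∨ x = 3 ∨ 5 ≤ x}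
  have hI : IsNormalizedIdeal S I := mk _ (by simp [I]) (by intro x hx; simp [I]; omega)
  have hJ : IsNormalizedIdeal S J := mk _ (by simp [J]) (by intro x hx; simp [J]; omega)
  have hL1 : IsNormalizedIdeal S L1 := mk _ (by simp [L1]) (by intro x hx; simp [L1]; omega)
  have hL2 : IsNormalizedIdeal S L2 := mk _ (by simp [L2]) (by intro x hx; simp [L2]; omega)
  have hP2 : IsNormalizedIdeal S P2 := mk _ (by simp [P2]) (by intro x hx; simp [P2]; omega)
  have hP3 : IsNormalizedIdeal S P3 := mk _ (by simp [P3]) (by intro x hx; simp [P3]; omega)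
  have e1 : I + P2 = L1 := by
    ext x
    simp only [Set.mem_add, I, P2, L1, Set.mem_ofPred_eq]
    constructor
    · rintro ⟨p, hp, q, hq, rfl⟩; omega
    · rintro (h | h | h | h | h)
      · exact ⟨0, by omega, 0, by omega, by omega⟩
      · exact ⟨1, by omega, 0, by omega, by omega⟩
      · exact ⟨0, by omega, 2, by omega, by omega⟩
      · exact ⟨1, by omega, 2, by omega, by omega⟩
      · exact ⟨x, by omega, 0, by omega, by omega⟩
  have e2 : J + P2 = L1 := by
    ext x
    simp only [Set.mem_add, J, P2, L1, Set.mem_ofPred_eq]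
    constructor
    · rintro ⟨p, hp, q, hq, rfl⟩; omega
    · rintro (h | h | h | h | h)
      · exact ⟨0, by omega, 0, by omega, by omega⟩
      · exact ⟨1, by omega, 0, by omega, by omega⟩
      · exact ⟨0, by omega, 2, by omega, by omega⟩
      · exact ⟨1, by omega, 2, by omega, by omega⟩
      · exact ⟨x, by omega, 0, by omega, by omega⟩
  have e3 : I + P3 = L2 := by
    ext x
    simp only [Set.mem_add, I, P3, L2, Set.mem_ofPred_eq]
    constructor
    · rintro ⟨p, hp, q, hq, rfl⟩; omega
    · rintro (h | h | h | h | h)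
      · exact ⟨0, by omega, 0, by omega, by omega⟩
      · exact ⟨1, by omega, 0, by omega, by omega⟩
      · exact ⟨0, by omega, 3, by omega, by omega⟩
      · exact ⟨1, by omega, 3, by omega, by omega⟩
      · exact ⟨x, by omega, 0, by omega, by omega⟩
  have e4 : J + P3 = L2 := by
    ext x
    simp only [Set.mem_add, J, P3, L2, Set.mem_ofPred_eq]
    constructor
    · rintro ⟨p, hp, q, hq, rfl⟩; omega
    · rintro (h | h | h | h | h)
      · exact ⟨0, by omega, 0, by omega, by omega⟩
      · exact ⟨1, by omega, 0, by omega, by omega⟩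
      · exact ⟨0, by omega, 3, by omega, by omega⟩
      · exact ⟨1, by omega, 3, by omega, by omega⟩
      · exact ⟨x, by omega, 0, by omega, by omega⟩
  obtain ⟨M, -, ⟨K, hK, hIK⟩, ⟨K', hK', hJK⟩, hl⟩ := (h I J hI hJ).1
  obtain ⟨Q1, hQ1, hM1⟩ := hl L1 hL1 ⟨P2, hP2, e1⟩ ⟨P2, hP2, e2⟩
  obtain ⟨Q2, hQ2, hM2⟩ := hl L2 hL2 ⟨P3, hP3, e3⟩ ⟨P3, hP3, e4⟩
  have m1 : ∀ x ∈ M, x ∈ L1 := fun x hx => by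
    rw [← hM1]; exact Set.mem_add.2 ⟨x, hx, 0, hQ1.1, by simp⟩
  have m2 : ∀ x ∈ M, x ∈ L2 := fun x hx => by
    rw [← hM2]; exact Set.mem_add.2 ⟨x, hx, 0, hQ2.1, by simp⟩
  have h3 : 3 ∈ M := by
    rw [← hJK]; exact Set.mem_add.2 ⟨3, by simp [J], 0, hK'.1, by simp⟩
  have h4 : 4 ∉ M := fun h => by
    have := m1 4 h
    simp [L1] at this
  have h2 : 2 ∉ M := fun h => by
    have := m2 2 h
    simp [L2] at this
  rw [← hIK] at h3
  obtain ⟨p, hp, q, hq, hpq⟩ := Set.mem_add.1 h3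
  simp only [I, Set.mem_ofPred_eq] at hp
  rcases hp with hp | hp | hp
  · apply h4
    rw [← hIK]
    have : q = 3 := by omega
    subst this
    exact Set.mem_add.2 ⟨1, by simp [I], 3, hq, by norm_num⟩
  · apply h2
    rw [← hIK]
    have : q = 2 := by omega
    subst this
    exact Set.mem_add.2 ⟨0, by simp [I], 2, hq, by norm_num⟩
  · omega

theorem add_ideal {S X Y : Set ℕ} (hX : IsNormalizedIdeal S X) (hY : IsNormalizedIdeal S Y) :
    IsNormalizedIdeal S (X + Y) := by
  refine ⟨Set.mem_add.2 ⟨0, hX.1, 0, hY.1, rfl⟩, fun i hi s hs => ?_⟩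
  obtain ⟨p, hp, q, hq, rfl⟩ := Set.mem_add.1 hi
  exact Set.mem_add.2 ⟨p, hp, q + s, hY.2 q hq s hs, by omega⟩

theorem preceq_trans {S X Y Z : Set ℕ} (h1 : Preceq S X Y) (h2 : Preceq S Y Z) : Preceq S X Z := by
  obtain ⟨P, hP, rfl⟩ := h1
  obtain ⟨Q, hQ, rfl⟩ := h2
  exact ⟨P + Q, add_ideal hP hQ, (add_assoc _ _ _).symm⟩

/-- In a finite poset with bottom, sups give infs. -/
theorem lattice_of_sup {T : Set ℕ} (hT : IsNormalizedIdeal T T) (hfin : Tᶜ.Finite)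
    (hs : ∀ I J : Set ℕ, IsNormalizedIdeal T I → IsNormalizedIdeal T J → ∃ M, IsSupNI T I J M) :
    NILattice T := by
  have bot : ∀ X, IsNormalizedIdeal T X → Preceq T T X := by
    intro X hX
    refine ⟨X, hX, ?_⟩
    ext x
    constructor
    · intro h
      obtain ⟨t, ht, y, hy, rfl⟩ := Set.mem_add.1 h
      rw [add_comm]
      exact hX.2 y hy t ht
    · intro h
      exact Set.mem_add.2 ⟨0, hT.1, x, h, by simp⟩
  have fin : {X : Set ℕ | IsNormalizedIdeal T X}.Finite := by
    refine Set.Finite.of_finite_image (f := fun X => Xᶜ) ?_ (fun X _ Y _ h => compl_injective h)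
    refine hfin.finite_subsets.subset ?_
    rintro _ ⟨X, hX, rfl⟩
    intro x hx hxT
    exact hx (sub_of_ideal hX hxT)
  have fam : ∀ F : Set (Set ℕ), F.Finite → (∀ X ∈ F, IsNormalizedIdeal T X) →
      ∃ M, IsNormalizedIdeal T M ∧ (∀ X ∈ F, Preceq T X M) ∧
        ∀ N, IsNormalizedIdeal T N → (∀ X ∈ F, Preceq T X N) → Preceq T M N := by
    intro F hF
    induction F, hF using Set.Finite.induction_on with
    | empty => exact fun _ => ⟨T, hT, by simp, fun N hN _ => bot N hN⟩
    | @insert X F _ _ ih =>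
      intro h
      obtain ⟨M, hM, h1, h2⟩ := ih (fun Y hY => h Y (Set.mem_insert_of_mem _ hY))
      obtain ⟨P, hP, h3, h4, h5⟩ := hs X M (h X (Set.mem_insert _ _)) hM
      refine ⟨P, hP, ?_, ?_⟩
      · intro Y hY
        rcases hY with rfl | hY
        · exact h3
        · exact preceq_trans (h1 Y hY) h4
      · intro N hN hub
        exact h5 N hN (hub X (Set.mem_insert _ _))
          (h2 N hN fun Y hY => hub Y (Set.mem_insert_of_mem _ hY))
  intro I J hI hJ
  refine ⟨hs I J hI hJ, ?_⟩
  obtain ⟨M, hM, h1, h2⟩ := fam {X | IsNormalizedIdeal T X ∧ Preceq T X I ∧ Preceq T X J}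
    (fin.subset fun X hX => hX.1) (fun X hX => hX.1)
  exact ⟨M, hM, h2 I hI (fun X hX => hX.2.1), h2 J hJ (fun X hX => hX.2.2),
    fun N hN h3 h4 => h1 N ⟨hN, h3, h4⟩⟩

/-- Data for the pair `S`, `T = S \ {a}`. -/
structure Base (S : Set ℕ) (a : ℕ) : Prop where
  h0 : 0 ∈ S
  hadd : ∀ x ∈ S, ∀ y ∈ S, x + y ∈ S
  haS : a ∈ S
  ha0 : a ≠ 0
  hbig : ∀ x, a < x → x ∈ S
  hT : IsNormalizedIdeal (S \ {a}) (S \ {a})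

variable {S : Set ℕ}

theorem Base.bigT (b : Base S a) {x : ℕ} (h : a < x) : x ∈ S \ {a} :=
  ⟨b.hbig x h, by simp; omega⟩

theorem Base.toT (_ : Base S a) {X : Set ℕ} (hX : IsNormalizedIdeal S X) :
    IsNormalizedIdeal (S \ {a}) X := ⟨hX.1, fun i hi s hs => hX.2 i hi s hs.1⟩

theorem Base.toS (b : Base S a) {X : Set ℕ} (hX : IsNormalizedIdeal (S \ {a}) X) :
    IsNormalizedIdeal S (X ∪ {a}) := by
  refine ⟨Or.inl hX.1, fun i hi s hs => ?_⟩
  by_cases hlt : a < i + s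
  · exact Or.inl (sub_of_ideal hX (b.bigT hlt))
  by_cases heq : i + s = a
  · exact Or.inr heq
  have hi' : i ∈ X := by
    rcases hi with h | h
    · exact h
    · have : i = a := h
      omega
  exact Or.inl (hX.2 i hi' s ⟨hs, by simp; omega⟩)

theorem Base.aS (b : Base S a) {X : Set ℕ} (hX : IsNormalizedIdeal S X) : a ∈ X :=
  sub_of_ideal hX b.haS

theorem Base.toS' (b : Base S a) {X : Set ℕ} (hX : IsNormalizedIdeal (S \ {a}) X) (h : a ∈ X) :
    IsNormalizedIdeal S X := by
  have := b.toS hX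
  rwa [Set.union_eq_self_of_subset_right (by simpa using h)] at this

theorem Base.E3 (b : Base S a) {X Y : Set ℕ} (hX : IsNormalizedIdeal (S \ {a}) X)
    (hY : IsNormalizedIdeal S Y) : Preceq (S \ {a}) X Y ↔ Preceq S (X ∪ {a}) Y := by
  have bigY : ∀ x, a ≤ x → x ∈ Y := fun x hx => by
    rcases hx.eq_or_lt with rfl | h
    · exact b.aS hY
    · exact sub_of_ideal hY (b.hbig x h)
  constructor
  · rintro ⟨K, hK, h⟩
    refine ⟨K ∪ {a}, b.toS hK, ?_⟩
    ext x
    constructor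
    · intro hx
      obtain ⟨p, hp, q, hq, rfl⟩ := Set.mem_add.1 hx
      rcases hp with hp | hp
      · rcases hq with hq | hq
        · rw [← h]; exact Set.add_mem_add hp hq
        · have : q = a := hq
          exact bigY _ (by omega)
      · have : p = a := hp
        exact bigY _ (by omega)
    · intro hx
      rw [← h] at hx
      exact Set.add_subset_add Set.subset_union_left Set.subset_union_left hx
  · rintro ⟨K, hK, h⟩
    refine ⟨K, b.toT hK, ?_⟩
    ext x
    constructor
    · intro hx
      rw [← h]
      exact Set.add_subset_add Set.subset_union_left subset_rfl hx
    · intro hx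
      by_cases hxa : a ≤ x
      · refine Set.mem_add.2 ⟨0, hX.1, x, ?_, by simp⟩
        rcases hxa.eq_or_lt with rfl | h
        · exact b.aS hK
        · exact sub_of_ideal hK (b.hbig x h)
      · rw [← h] at hx
        obtain ⟨p, hp, q, hq, rfl⟩ := Set.mem_add.1 hx
        rcases hp with hp | hp
        · exact Set.add_mem_add hp hq
        · have : p = a := hp
          omega

/-- Building the context. -/
theorem Base.ctx (b : Base S a) {m : ℕ} (hm : 1 ≤ m) (hm4 : m ≤ 4) (hmS : m ∈ S) (hma : m ≠ a)
    {I J L M : Set ℕ} (hI : IsNormalizedIdeal (S \ {a}) I) (hJ : IsNormalizedIdeal (S \ {a}) J)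
    (hM : IsSupNI S (I ∪ {a}) (J ∪ {a}) M) (hL : IsNormalizedIdeal (S \ {a}) L) (haL : a ∉ L)
    (hIL : Preceq (S \ {a}) I L) (hJL : Preceq (S \ {a}) J L) :
    ∃ K1 K2 A A2 K, Ctx m a (S \ {a}) I J L K1 K2 M A A2 K := by
  obtain ⟨hMi, ⟨A, hA, hIA⟩, ⟨A2, hA2, hJA⟩, hl⟩ := hM
  obtain ⟨K1, hK1, hIK⟩ := hIL
  obtain ⟨K2, hK2, hJK⟩ := hJL
  -- `L ∪ {a}` is an upper bound
  have ub : ∀ X : Set ℕ, IsNormalizedIdeal (S \ {a}) X → Preceq (S \ {a}) X L →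
      Preceq S (X ∪ {a}) (L ∪ {a}) := by
    intro X hX hXL
    refine (b.E3 hX (b.toS hL)).1 (preceq_trans hXL ?_)
    refine (b.E3 hL (b.toS hL)).2 ⟨S, ⟨b.h0, b.hadd⟩, ?_⟩
    ext x
    constructor
    · intro h
      obtain ⟨p, hp, q, hq, rfl⟩ := Set.mem_add.1 h
      exact (b.toS hL).2 p hp q hq
    · intro h
      exact Set.mem_add.2 ⟨x, h, 0, b.h0, by simp⟩
  obtain ⟨K, hK, hMK⟩ := hl _ (b.toS hL) (ub I hI ⟨K1, hK1, hIK⟩) (ub J hJ ⟨K2, hK2, hJK⟩)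
  have bigX : ∀ {X : Set ℕ}, IsNormalizedIdeal (S \ {a}) X → ∀ x, a ≤ x → x ≠ a → x ∈ X :=
    fun hX x h h' => sub_of_ideal hX (b.bigT (by omega))
  have hupp : ∀ {X A : Set ℕ}, IsNormalizedIdeal (S \ {a}) X → IsNormalizedIdeal S A →
      (X ∪ {a}) + A = M → ∀ z ∈ M, z ≠ a → ∃ i ∈ X, ∃ k ∈ A, i + k = z := by
    intro X A hX hA h z hz hza
    by_cases hlt : a ≤ z
    · exact ⟨z, bigX hX z hlt hza, 0, hA.1, by simp⟩
    rw [← h] at hz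
    obtain ⟨p, hp, q, hq, rfl⟩ := Set.mem_add.1 hz
    rcases hp with hp | hp
    · exact ⟨p, hp, q, hq, rfl⟩
    · have : p = a := hp
      omega
  have hIJ : Preceq S (I ∪ {a}) ((I ∪ {a}) + (J ∪ {a})) := ⟨_, b.toS hJ, rfl⟩
  have hJI : Preceq S (J ∪ {a}) ((I ∪ {a}) + (J ∪ {a})) := ⟨_, b.toS hI, add_comm _ _⟩
  obtain ⟨Q, hQ, hMQ⟩ := hl _ (add_ideal (b.toS hI) (b.toS hJ)) hIJ hJI
  -- half of the removal statement
  have half : ∀ (u : ℕ), u < a → ∀ {X A : Set ℕ}, IsNormalizedIdeal (S \ {a}) X →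
      IsNormalizedIdeal S A → (X ∪ {a}) + A = M → u ∉ X →
      (∀ z ∈ M, z ≠ u → z = a ∨ ∃ i ∈ X, ∃ k ∈ A, i + k = z ∧ ∀ i' ∈ X, k + i' ≠ u) →
      IsNormalizedIdeal S (M \ {u}) → Preceq S (X ∪ {a}) (M \ {u}) := by
    intro u hua X A hX hA hXA huX h hN
    refine ⟨{k | ∀ i ∈ X ∪ {a}, k + i ∈ M \ {u}}, ⟨?_, ?_⟩, ?_⟩
    · intro i hi
      rw [zero_add]
      refine ⟨?_, ?_⟩
      · rw [← hXA]
        exact Set.mem_add.2 ⟨i, hi, 0, hA.1, by simp⟩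
      · rintro rfl
        rcases hi with hi | hi
        · exact huX hi
        · have : i = a := hi
          omega
    · intro k hk s hs i hi
      have := hk (i + s) ((b.toS hX).2 i hi s hs)
      rwa [show k + s + i = k + (i + s) by omega]
    · ext z
      constructor
      · intro hz
        obtain ⟨p, hp, q, hq, rfl⟩ := Set.mem_add.1 hz
        rw [add_comm]
        exact hq p hp
      · rintro ⟨hz, hzu⟩
        rcases h z hz hzu with rfl | ⟨i, hi, k, hk, rfl, hki⟩
        · refine Set.mem_add.2 ⟨z, Or.inr rfl, 0, ?_, by simp⟩
          intro i hi
          rw [zero_add]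
          refine ⟨?_, ?_⟩
          · rw [← hXA]
            exact Set.mem_add.2 ⟨i, hi, 0, hA.1, by simp⟩
          · rintro rfl
            rcases hi with hi | hi
            · exact huX hi
            · have : i = z := hi
              omega
        · refine Set.mem_add.2 ⟨i, Or.inl hi, k, ?_, rfl⟩
          intro i' hi'
          refine ⟨?_, ?_⟩
          · rw [← hXA, add_comm k i']
            exact Set.add_mem_add hi' hk
          · rcases hi' with hi' | hi'
            · exact hki i' hi'
            · have : i' = a := hi'
              simp only [Set.mem_singleton_iff]
              omega
  refine ⟨K1, K2, A, A2, K, ?_⟩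
  exact {
    hm := hm
    hm4 := hm4
    iT := b.hT
    hmT := ⟨hmS, hma⟩
    hTa := fun x hx => b.bigT hx
    iI := hI
    iJ := hJ
    iL := hL
    iK1 := hK1
    iK2 := hK2
    iM := b.toT hMi
    iA := b.toT hA
    iA2 := b.toT hA2
    iK := b.toT hK
    haL := haL
    haM := b.aS hMi
    hIK := fun i hi k hk => hIK ▸ Set.add_mem_add hi hk
    hIK' := fun z hz => Set.mem_add.1 (hIK.symm ▸ hz)
    hJK := fun i hi k hk => hJK ▸ Set.add_mem_add hi hk
    hJK' := fun z hz => Set.mem_add.1 (hJK.symm ▸ hz)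
    hIA := fun i hi k hk => hIA ▸ Set.add_mem_add (Or.inl hi) hk
    hIA' := hupp hI hA hIA
    hJA := fun i hi k hk => hJA ▸ Set.add_mem_add (Or.inl hi) hk
    hJA' := hupp hJ hA2 hJA
    hMK := fun x hx k hk => by
      have : x + k ∈ L ∪ {a} := hMK ▸ Set.add_mem_add hx hk
      exact this
    hMK' := fun z hz => Set.mem_add.1 (hMK.symm ▸ Or.inl hz)
    hsup := fun z hz hza => by
      by_cases hlt : a ≤ z
      · exact ⟨z, bigX hI z hlt hza, 0, hJ.1, by simp⟩
      have : z ∈ (I ∪ {a}) + (J ∪ {a}) := by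
        rw [← hMQ]
        exact Set.mem_add.2 ⟨z, hz, 0, hQ.1, by simp⟩
      obtain ⟨p, hp, q, hq, rfl⟩ := Set.mem_add.1 this
      rcases hp with hp | hp
      · rcases hq with hq | hq
        · exact ⟨p, hp, q, hq, rfl⟩
        · have : q = a := hq
          omega
      · have : p = a := hp
        omega
    hrem := fun u hu huI huJ hua h1 h2 h3 => by
      have hN : IsNormalizedIdeal S (M \ {u}) := by
        refine ⟨⟨hMi.1, ?_⟩, fun x hx s hs => ⟨hMi.2 x hx.1 s hs, ?_⟩⟩
        · rintro rfl
          exact huI hI.1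
        · by_cases hsa : s = a
          · simp only [Set.mem_singleton_iff]
            omega
          · exact h1 x hx.1 hx.2 s ⟨hs, hsa⟩
      obtain ⟨Q, hQ, h⟩ := hl _ hN (half u hua hI hA hIA huI h2 hN)
        (half u hua hJ hA2 hJA huJ h3 hN)
      have : u ∈ M \ {u} := by
        rw [← h]
        exact Set.mem_add.2 ⟨u, hu, 0, hQ.1, by simp⟩
      exact this.2 rfl }

theorem Base.sup (b : Base S a) {m : ℕ} (hm : 1 ≤ m) (hm4 : m ≤ 4) (hmS : m ∈ S) (hma : m ≠ a)
    (hlat : NILattice S) {I J : Set ℕ} (hI : IsNormalizedIdeal (S \ {a}) I)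
    (hJ : IsNormalizedIdeal (S \ {a}) J) : ∃ M, IsSupNI (S \ {a}) I J M := by
  obtain ⟨M, hM⟩ := (hlat _ _ (b.toS hI) (b.toS hJ)).1
  have haM := b.aS hM.1
  by_cases hex : ∃ L, IsNormalizedIdeal (S \ {a}) L ∧ a ∉ L ∧ Preceq (S \ {a}) I L ∧
      Preceq (S \ {a}) J L
  · obtain ⟨L, hL, haL, hIL, hJL⟩ := hex
    obtain ⟨K1, K2, A, A2, K, c⟩ := b.ctx hm hm4 hmS hma hI hJ hM hL haL hIL hJL
    have hN : IsNormalizedIdeal (S \ {a}) (M \ {a}) := by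
      refine ⟨⟨hM.1.1, fun h => b.ha0 h.symm⟩, fun x hx s hs => ⟨hM.1.2 x hx.1 s hs.1, ?_⟩⟩
      intro h
      have h : x + s = a := h
      exact haL (h ▸ hL.2 x (c.ML hx.1 hx.2) s hs)
    have low : ∀ {I J K1 K2 A A2 : Set ℕ}, Ctx m a (S \ {a}) I J L K1 K2 M A A2 K →
        Preceq (S \ {a}) I (M \ {a}) := by
      intro I J K1 K2 A A2 c
      refine ⟨{k | ∀ i ∈ I, k + i ∈ M ∧ k + i ≠ a}, ⟨?_, ?_⟩, ?_⟩
      · intro i hi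
        rw [zero_add]
        exact ⟨c.IM hi, fun h => haL (h ▸ c.IL hi)⟩
      · intro k hk s hs i hi
        have := hk (i + s) (c.iI.2 i hi s hs)
        rwa [show k + s + i = k + (i + s) by omega]
      · ext z
        constructor
        · intro hz
          obtain ⟨p, hp, q, hq, rfl⟩ := Set.mem_add.1 hz
          rw [add_comm]
          exact hq p hp
        · rintro ⟨hz, hza⟩
          obtain ⟨i, hi, k, hik, hk⟩ := c.core1 z hz hza
          exact Set.mem_add.2 ⟨i, hi, k, hk, hik⟩
    refine ⟨M \ {a}, hN, low c, low c.swap, ?_⟩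
    intro L' hL' hIL' hJL'
    by_cases haL' : a ∈ L'
    · have hS' := b.toS' hL' haL'
      rw [b.E3 hN hS']
      rw [Set.sdiff_union_self, Set.union_eq_self_of_subset_right (by simpa using haM)]
      exact hM.2.2.2 L' hS' ((b.E3 hI hS').1 hIL') ((b.E3 hJ hS').1 hJL')
    · obtain ⟨K1, K2, A, A2, K, c⟩ := b.ctx hm hm4 hmS hma hI hJ hM hL' haL' hIL' hJL'
      refine ⟨{k | ∀ n ∈ M, n ≠ a → k + n ∈ L'}, ⟨?_, ?_⟩, ?_⟩
      · intro n hn hna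
        rw [zero_add]
        exact c.ML hn hna
      · intro k hk s hs n hn hna
        have := hL'.2 _ (hk n hn hna) s hs
        rwa [show k + s + n = k + n + s by omega]
      · ext z
        constructor
        · intro hz
          obtain ⟨p, hp, q, hq, rfl⟩ := Set.mem_add.1 hz
          rw [add_comm]
          exact hq p hp.1 hp.2
        · intro hz
          obtain ⟨n, hn, hna, k, hk, h⟩ := c.core2 z hz
          exact Set.mem_add.2 ⟨n, ⟨hn, hna⟩, k, h, hk⟩
  · refine ⟨M, b.toT hM.1, (b.E3 hI hM.1).2 hM.2.1, (b.E3 hJ hM.1).2 hM.2.2.1, ?_⟩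
    intro L hL hIL hJL
    have haL : a ∈ L := by
      by_contra h
      exact hex ⟨L, hL, h, hIL, hJL⟩
    have hS' := b.toS' hL haL
    rw [b.E3 (b.toT hM.1) hS', Set.union_eq_self_of_subset_right (by simpa using haM)]
    exact hM.2.2.2 L hS' ((b.E3 hI hS').1 hIL) ((b.E3 hJ hS').1 hJL)

end NILat

/-- Theorem: if `(𝔑(S), ⪯)` is a lattice and `a` is a minimal
generator of `S` with `a ≠ m(S)` and `a > F(S)`, then `(𝔑(S \ {a}), ⪯)` is a
lattice as well. -/
theorem NILattice_remove_min_gen (S : Set ℕ) (hS : IsNumericalSemigroup S)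
    (hlat : NILattice S)
    (a : ℕ) (ha : IsMinimalGenerator S a) (hne : a ≠ multNS S) (hgt : frobNS S < a) :
    NILattice (S \ {a}) := by
  obtain ⟨h0, hadd, hfin⟩ := hS
  obtain ⟨haS, ha0, hmg⟩ := ha
  have hmem : multNS S ∈ {n : ℕ | n ∈ S ∧ n ≠ 0} := Nat.sInf_mem ⟨a, haS, ha0⟩
  have hle : ∀ x ∈ S, x ≠ 0 → multNS S ≤ x := fun x hx hx0 => Nat.sInf_le ⟨hx, hx0⟩
  have hT : IsNormalizedIdeal (S \ {a}) (S \ {a}) := by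
    refine ⟨⟨h0, fun h => ha0 h.symm⟩, fun x hx y hy => ⟨hadd x hx.1 y hy.1, fun h => ?_⟩⟩
    have h : x + y = a := h
    by_cases hx0 : x = 0
    · exact hy.2 (by simp only [Set.mem_singleton_iff]; omega)
    by_cases hy0 : y = 0
    · exact hx.2 (by simp only [Set.mem_singleton_iff]; omega)
    exact hmg ⟨x, hx.1, y, hy.1, hx0, hy0, h.symm⟩
  have b : NILat.Base S a := by
    refine ⟨h0, hadd, haS, ha0, fun x hx => ?_, hT⟩
    by_contra hxS
    have : x ≤ frobNS S := le_csSup hfin.bddAbove hxS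
    omega
  have hm4 : multNS S ≤ 4 := by
    by_contra h
    exact NILat.not_lattice_of_five
      (fun x hx hx0 => by have := hle x hx hx0; omega) hlat
  refine NILat.lattice_of_sup hT ?_ fun I J hI hJ =>
    b.sup (Nat.one_le_iff_ne_zero.2 hmem.2) hm4 hmem.1 hne.symm hlat hI hJ
  refine (hfin.union (Set.finite_singleton a)).subset ?_
  intro x hx
  by_cases hxa : x = a
  · exact Or.inr hxa
  · exact Or.inl fun h => hx ⟨h, hxa⟩
end

section
/- Let S be a numerical semigroup with multiplicity four. Then (𝔑(S), ⪯) is a lattice: every pair of normalized ideals of S has a supremum and an infimum with respect to ⪯. -/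
open Pointwise

def PP (a1 a2 a3 x1 x2 x3 : ℤ) : Prop :=
  (x1 ≤ a1 ∧ x2 ≤ a2 ∧ x3 ≤ a3) ∧
  (a1 = x1 ∨ (x2 ≤ a1 + x1 ∧ x3 ≤ a2 + x1)) ∧
  (a3 = x3 ∨ (x2 ≤ a3 + x3 ∧ x1 ≤ a2 + x3)) ∧
  (a2 = x2 ∨ (x3 ≤ a1 + x2 ∧ x1 ≤ a3 + x2) ∨ (a1 + x1 ≤ x2 ∧ a1 + x3 ≤ a2 + x2)
    ∨ (a3 + x3 ≤ x2 ∧ a3 + x1 ≤ a2 + x2))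

theorem lemA (a1 a2 a3 b1 b2 b3 x1 x2 x3 : ℤ)
  (ha : 0 ≤ x1 ∧ 0 ≤ x2 ∧ 0 ≤ x3) (h2 : a2 ≤ b2)
  (hu : PP a1 a2 a3 (min a1 b1) a2 (min a3 b3)) (hu' : PP b1 b2 b3 (min a1 b1) a2 (min a3 b3))
  (hx : PP a1 a2 a3 x1 x2 x3) (hx' : PP b1 b2 b3 x1 x2 x3) :
    PP (min a1 b1) a2 (min a3 b3) x1 x2 x3 := by
  obtain ⟨hl, h1, h3, hd⟩ := hx
  obtain ⟨hl', h1', h3', hd'⟩ := hx'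
  refine ⟨by omega, ?_, ?_, ?_⟩
  · clear hu hu' hd hd' h3 h3'; omega
  · clear hu hu' hd hd' h1 h1'; omega
  · obtain ⟨kl, k1, k3, kd⟩ := hu
    obtain ⟨kl', k1', k3', kd'⟩ := hu'
    by_cases e : a2 = x2
    · exact Or.inl e
    have e' : b2 ≠ x2 := by omega
    simp only [e, e', false_or] at hd hd' ⊢
    rcases le_total a1 b1 with g1 | g1 <;> rcases le_total a3 b3 with g3 | g3 <;>
    simp only [min_eq_left, min_eq_right, g1, g3, true_or] at k1 k1' k3 k3' kd kd' kl kl' ⊢ <;>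
    rcases hd with hd | hd | hd <;> rcases hd' with hd' | hd' | hd' <;> (try omega)

theorem lemB3 (a1 a2 a3 b1 b2 b3 t x1 x2 x3 : ℤ)
  (ha : 0 ≤ x1 ∧ 0 ≤ x2 ∧ 0 ≤ x3) (h2 : a2 ≤ b2)
  (ht : t = min (min a3 b3) (max (max (a1+b2) (a2+b1)) (a2+b2-b1)))
  (hu : PP a1 a2 a3 (min a1 b1) a2 t) (hu' : PP b1 b2 b3 (min a1 b1) a2 t)
  (hx : PP a1 a2 a3 x1 x2 x3) (hx' : PP b1 b2 b3 x1 x2 x3) (h : x3 ≤ t) :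
    PP (min a1 b1) a2 t x1 x2 x3 := by
  have hl := hx.1
  have hl' := hx'.1
  have q : t = min a3 b3 ∨ (t < a3 ∧ t < b3 ∧ t ≥ a1 + b2 ∧ t ≥ a2 + b1 ∧ t ≥ a2 + b2 - b1) := by omega
  have q' : t ≤ a3 ∧ t ≤ b3 := by omega
  clear ht
  obtain ⟨-, h1, h3, hd⟩ := hx
  obtain ⟨-, h1', h3', hd'⟩ := hx'
  refine ⟨by clear q hd hd' h1 h1' h3 h3'; omega, ?_, ?_, ?_⟩
  · clear hu hu' hd hd' h3 h3'; omega
  · clear hu hu' hd hd' h1 h1'; omega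
  · obtain ⟨kl, k1, k3, kd⟩ := hu
    obtain ⟨kl', k1', k3', kd'⟩ := hu'
    by_cases e : a2 = x2
    · exact Or.inl e
    have e' : b2 ≠ x2 := by omega
    simp only [e, e', false_or] at hd hd' ⊢
    rcases le_total a1 b1 with g1 | g1 <;> rcases le_total a3 b3 with g3 | g3 <;>
    simp only [min_eq_left, min_eq_right, g1, g3, true_or] at k1 k1' k3 k3' kd kd' kl kl' q ⊢ <;>
    rcases hd with hd | hd | hd <;> rcases hd' with hd' | hd' | hd' <;> (try omega)

theorem lemB3' (a1 a2 a3 b1 b2 b3 t x1 x2 x3 : ℤ)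
  (ha : 0 ≤ x1 ∧ 0 ≤ x2 ∧ 0 ≤ x3) (h2 : a2 ≤ b2)
  (ht : t = min (min a3 b3) (max (max (a1+b2) (a2+b1)) (a2+b2-b1)))
  (hx : PP a1 a2 a3 x1 x2 x3) (hx' : PP b1 b2 b3 x1 x2 x3) (h : t < x3) :
    PP a1 a2 a3 (min a1 b1) a2 (min a3 b3) ∧ PP b1 b2 b3 (min a1 b1) a2 (min a3 b3) := by
  have hl := hx.1
  have hl' := hx'.1
  have q1 : t ≥ a1 + b2 := by omega
  have q2 : t ≥ a2 + b1 := by omega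
  have q3 : t ≥ a2 + b2 - b1 := by omega
  clear ht
  have e1 : a1 = x1 := by have := hx.2.1; omega
  have e1' : b1 = x1 := by have := hx'.2.1; omega
  have e2 : a2 = b2 := by have := hx'.2.2.2; omega
  clear hx hx'
  subst e1 e1' e2
  rw [min_self]
  refine ⟨⟨?_, ?_, ?_, ?_⟩, ⟨?_, ?_, ?_, ?_⟩⟩ <;> omega

theorem lemB2 (a1 a2 a3 b1 b2 b3 t x1 x2 x3 : ℤ)
  (ha : 0 ≤ x1 ∧ 0 ≤ x2 ∧ 0 ≤ x3) (h2 : a2 ≤ b2)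
  (ht : t = min a2 (max (a1+b1) (a3+b3)))
  (hu : PP a1 a2 a3 (min a1 b1) t (min a3 b3)) (hu' : PP b1 b2 b3 (min a1 b1) t (min a3 b3))
  (hx : PP a1 a2 a3 x1 x2 x3) (hx' : PP b1 b2 b3 x1 x2 x3) (h : x2 ≤ t) :
    PP (min a1 b1) t (min a3 b3) x1 x2 x3 := by
  have q : t = a2 ∨ (t < a2 ∧ a1 + b1 ≤ t ∧ a3 + b3 ≤ t) := by omega
  rcases q with q | q
  · subst q
    exact lemA _ _ _ _ _ _ _ _ _ ha h2 hu hu' hx hx'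
  obtain ⟨hl, h1, h3, hd⟩ := hx
  obtain ⟨hl', h1', h3', hd'⟩ := hx'
  obtain ⟨kl, k1, k3, kd⟩ := hu
  obtain ⟨kl', k1', k3', kd'⟩ := hu'
  refine ⟨by clear ht hd hd' h1 h1' h3 h3' k1 k1' k3 k3' kd kd'; omega, ?_, ?_, ?_⟩
  · clear ht hd hd' h3 h3' k1 k1' k3 k3' kd kd'; omega
  · clear ht hd hd' h1 h1' k1 k1' k3 k3' kd kd'; omega
  · clear ht
    by_cases e : t = x2
    · exact Or.inl e
    have e' : b2 ≠ x2 := by clear q hd hd' h1 h1' h3 h3' k1 k1' k3 k3' kd kd'; omega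
    have e'' : a2 ≠ x2 := by clear hd hd' h1 h1' h3 h3' k1 k1' k3 k3' kd kd'; omega
    simp only [e, e', e'', false_or] at hd hd' ⊢
    rcases le_total a1 b1 with g1 | g1 <;> rcases le_total a3 b3 with g3 | g3 <;>
    simp only [min_eq_left, min_eq_right, g1, g3, true_or] at k1 k1' k3 k3' kd kd' kl kl' ⊢ <;>
    rcases hd with hd | hd | hd <;> rcases hd' with hd' | hd' | hd' <;> (try omega)

theorem lemB2' (a1 a2 a3 b1 b2 b3 t x1 x2 x3 : ℤ)
  (ha : 0 ≤ x1 ∧ 0 ≤ x2 ∧ 0 ≤ x3) (h2 : a2 ≤ b2)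
  (ht : t = min a2 (max (a1+b1) (a3+b3)))
  (hx : PP a1 a2 a3 x1 x2 x3) (hx' : PP b1 b2 b3 x1 x2 x3) (h : t < x2) :
    PP a1 a2 a3 (min a1 b1) a2 (min a3 b3) ∧ PP b1 b2 b3 (min a1 b1) a2 (min a3 b3) := by
  have hl := hx.1
  have hl' := hx'.1
  have q1 : a1 + b1 ≤ t := by omega
  have q2 : a3 + b3 ≤ t := by omega
  clear ht
  have e1 : a1 = x1 := by have := hx.2.1; omega
  have e1' : b1 = x1 := by have := hx'.2.1; omega
  have e3 : a3 = x3 := by have := hx.2.2.1; omega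
  have e3' : b3 = x3 := by have := hx'.2.2.1; omega
  have hd := hx'.2.2.2
  clear hx hx'
  subst e1 e1' e3 e3'
  rw [min_self, min_self]
  refine ⟨⟨?_, ?_, ?_, ?_⟩, ⟨?_, ?_, ?_, ?_⟩⟩ <;> omega

theorem lemC3 (a1 a2 a3 b1 b2 b3 t x1 x2 x3 : ℤ)
  (ha : 0 ≤ x1 ∧ 0 ≤ x2 ∧ 0 ≤ x3) (h2 : a2 ≤ b2)
  (ht : t = min (min a3 b3) (max (max (a1+b2) (a2+b1)) (a2+b2-b1)))
  (hx : PP a1 a2 a3 x1 x2 x3) (hx' : PP b1 b2 b3 x1 x2 x3) (h : a1 + b2 < x3 ∨ a2 + b1 < x3) :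
    PP a1 a2 a3 (min a1 b1) a2 t ∧ PP b1 b2 b3 (min a1 b1) a2 t := by
  have hl := hx.1
  have hl' := hx'.1
  have g1 := hx.2.1
  have g1' := hx'.2.1
  have e1 : a1 = x1 := by omega
  have hd' := hx'.2.2.2
  have hd := hx.2.2.2
  clear hx hx' g1
  subst e1
  have hm : min a1 b1 = a1 := by omega
  rw [hm]; clear hm
  have hg : a1 ≤ t ∧ a2 ≤ t := by clear g1' hd hd'; omega
  have hT : t ≤ a3 ∧ t ≤ b3 := by clear g1' hd hd' h; omega
  have hT' : t ≤ a1 + b2 ∨ t ≤ a2 + b1 ∨ t ≤ a2 + b2 - b1 := by clear g1' hd hd' h; omega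
  clear ht
  rcases g1' with e | e
  · subst e
    clear hd
    refine ⟨⟨?_, ?_, ?_, ?_⟩, ⟨?_, ?_, ?_, ?_⟩⟩ <;> omega
  · have h : a2 + b1 < x3 := by omega
    have hd' : b1 + a1 ≤ x2 ∧ b1 + x3 ≤ b2 + x2 := by omega
    have hh : a2 = x2 := by omega
    clear hd
    refine ⟨⟨?_, ?_, ?_, ?_⟩, ⟨?_, ?_, ?_, ?_⟩⟩ <;> omega

theorem lemE3 (a1 a2 a3 b1 b2 b3 t s : ℤ)
  (ha : 0 ≤ a1 ∧ 0 ≤ a2 ∧ 0 ≤ a3 ∧ 0 ≤ b3) (h2 : a2 ≤ b2)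
  (ht : t = min (min a3 b3) (max (max (a1+b2) (a2+b1)) (a2+b2-b1)))
  (hs : s = min a2 (max (a1+b1) (a3+b3)))
  (e1 : a1 = b1) (e2 : 2 * a1 ≤ a2) (e3 : a3 = b3 ∨ 2 * a1 ≤ a3 + b3) :
    (PP a1 a2 a3 (min a1 b1) a2 t ∧ PP b1 b2 b3 (min a1 b1) a2 t) ∨
    (PP a1 a2 a3 (min a1 b1) s (min a3 b3) ∧ PP b1 b2 b3 (min a1 b1) s (min a3 b3)) := by
  subst e1
  rw [min_self]
  by_cases h : a3 ≠ b3 ∧ a3 + b3 < a2 ∧ t = min a3 b3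
  · right
    clear ht
    have hs : s = a3 + b3 := by omega
    refine ⟨⟨?_, ?_, ?_, ?_⟩, ⟨?_, ?_, ?_, ?_⟩⟩ <;> omega
  · left
    clear hs
    have hT : t ≤ a3 ∧ t ≤ b3 := by omega
    have hT' : t ≤ a2 + b2 - a1 := by omega
    have hT'' : t = min a3 b3 ∨ (a1 ≤ t ∧ a2 ≤ t) := by omega
    clear ht
    refine ⟨⟨?_, ?_, ?_, ?_⟩, ⟨?_, ?_, ?_, ?_⟩⟩ <;> omega

def EE (a1 a2 a3 b1 b3 : ℤ) : Prop := a1 = b1 ∧ 2 * a1 ≤ a2 ∧ (a3 = b3 ∨ 2 * a1 ≤ a3 + b3)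

theorem lemC2 (a1 a2 a3 b1 b2 b3 x1 x2 x3 : ℤ)
  (ha : 0 ≤ x1 ∧ 0 ≤ x2 ∧ 0 ≤ x3) (h2 : a2 ≤ b2)
  (hx : PP a1 a2 a3 x1 x2 x3) (hx' : PP b1 b2 b3 x1 x2 x3) (h : a1 + b1 < x2) :
    EE a1 a2 a3 b1 b3 := by
  obtain ⟨hl, g1, g3, -⟩ := hx
  obtain ⟨hl', g1', g3', -⟩ := hx'
  have e1 : a1 = x1 := by omega
  have e1' : b1 = x1 := by omega
  refine ⟨by omega, by omega, by omega⟩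

/-- first half of the first coordinate condition -/
theorem lemCd1 (a1 a2 a3 b1 b2 b3 x1 x2 x3 : ℤ)
  (ha : 0 ≤ x1 ∧ 0 ≤ x2 ∧ 0 ≤ x3) (h2 : a2 ≤ b2)
  (hx : PP a1 a2 a3 x1 x2 x3) (hx' : PP b1 b2 b3 x1 x2 x3)
  (c1 c2 : ℤ) (hc1 : c1 = min (min a1 b1) (min (a2+b3) (a3+b2)))
  (hc2 : c2 = min a2 (min (a1+b1) (a3+b3)))
  (k1 : x1 ≤ c1) (k2 : x2 ≤ c2) :
    (c1 = x1 ∨ (x2 ≤ c1 + x1 ∧ x3 ≤ c2 + x1)) ∨ EE a1 a2 a3 b1 b3 := by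
  have hl := hx.1
  have hl' := hx'.1
  by_cases e : c1 = x1
  · left; left; exact e
  have n1 : a1 ≠ x1 := by omega
  have n1' : b1 ≠ x1 := by omega
  have g1 := hx.2.1
  have g1' := hx'.2.1
  simp only [n1, n1', false_or] at g1 g1'
  have z : x2 ≤ c1 + x1 := by omega
  by_cases w : x3 ≤ c2 + x1
  · left; right; exact ⟨z, w⟩
  have w' : a1 + b1 + x1 < x3 := by omega
  clear hc1 hc2
  right
  have gd := hx.2.2.2
  have gd' := hx'.2.2.2
  have : a1 + x1 ≤ x2 := by clear gd'; omega
  have : b1 + x1 ≤ x2 := by clear gd; omega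
  have : a1 = b1 := by clear gd gd'; omega
  refine ⟨by omega, by omega, by omega⟩

theorem lemCd2 (a1 a2 a3 b1 b2 b3 x1 x2 x3 : ℤ)
  (ha : 0 ≤ x1 ∧ 0 ≤ x2 ∧ 0 ≤ x3) (h2 : a2 ≤ b2)
  (hx : PP a1 a2 a3 x1 x2 x3) (hx' : PP b1 b2 b3 x1 x2 x3)
  (c1 c2 : ℤ) (hc1 : c1 = min (min a1 b1) (min (a2+b3) (a3+b2)))
  (hc2 : c2 = min a2 (min (a1+b1) (a3+b3)))
  (k1 : x1 ≤ c1) (k2 : x2 ≤ c2) (e : c2 ≠ x2) (p : c1 + x2 < x3)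
  (q : ¬ (c1 + x1 ≤ x2 ∧ c1 + x3 ≤ c2 + x2)) : EE a1 a2 a3 b1 b3 := by
  have hl := hx.1
  have hl' := hx'.1
  obtain ⟨-, g1, -, gd⟩ := hx
  obtain ⟨-, g1', -, gd'⟩ := hx'
  have y1 : c1 ≤ a1 ∧ c1 ≤ b1 ∧ (c1 = a1 ∨ c1 = b1) := by
    clear g1 gd g1' gd' q hc2; omega
  have y2 : c2 ≤ a2 ∧ c2 ≤ a1 + b1 ∧ (c2 = a2 ∨ c2 = a1 + b1 ∨ c2 = a3 + b3) := by
    clear g1 gd g1' gd' q hc1; omega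
  have n2 : a2 ≠ x2 := by clear g1 gd g1' gd' q hc1 hc2; omega
  have n2' : b2 ≠ x2 := by clear g1 gd g1' gd' q hc1 hc2; omega
  have n3 : ¬ (a3 + x3 ≤ x2 ∧ a3 + x1 ≤ a2 + x2) := by clear g1 gd g1' gd' q hc1 hc2; omega
  have n3' : ¬ (b3 + x3 ≤ x2 ∧ b3 + x1 ≤ b2 + x2) := by clear g1 gd g1' gd' q hc1 hc2; omega
  simp only [n2, n2', n3, n3', false_or, or_false] at gd gd'
  clear hc1 hc2 n3 n3'
  rcases gd with gd | gd <;> rcases gd' with gd' | gd' <;> rcases g1 with g1 | g1 <;>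
    rcases g1' with g1' | g1' <;>
    refine ⟨?_, ?_, ?_⟩ <;> omega

theorem PP.sw {a1 a2 a3 x1 x2 x3 : ℤ} (h : PP a1 a2 a3 x1 x2 x3) : PP a3 a2 a1 x3 x2 x1 := by
  obtain ⟨⟨l1, l2, l3⟩, h1, h3, h2⟩ := h
  exact ⟨⟨l3, l2, l1⟩, h3, h1, by tauto⟩

theorem lemC1 (a1 a2 a3 b1 b2 b3 x1 x2 x3 : ℤ)
  (ha : 0 ≤ x1 ∧ 0 ≤ x2 ∧ 0 ≤ x3) (h2 : a2 ≤ b2)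
  (hx : PP a1 a2 a3 x1 x2 x3) (hx' : PP b1 b2 b3 x1 x2 x3)
  (c1 c2 c3 : ℤ) (hc1 : c1 = min (min a1 b1) (min (a2+b3) (a3+b2)))
  (hc2 : c2 = min a2 (min (a1+b1) (a3+b3)))
  (hc3 : c3 = min (min a3 b3) (min (a1+b2) (a2+b1)))
  (k1 : x1 ≤ c1) (k2 : x2 ≤ c2) (k3 : x3 ≤ c3) :
    PP c1 c2 c3 x1 x2 x3 ∨ EE a1 a2 a3 b1 b3 ∨ EE a3 a2 a1 b3 b1 := by
  have ha' : 0 ≤ x3 ∧ 0 ≤ x2 ∧ 0 ≤ x1 := ⟨ha.2.2, ha.2.1, ha.1⟩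
  have hc3' : c3 = min (min a3 b3) (min (a2+b1) (a1+b2)) := by omega
  have hc2' : c2 = min a2 (min (a3+b3) (a1+b1)) := by omega
  rcases lemCd1 _ _ _ _ _ _ _ _ _ ha h2 hx hx' c1 c2 hc1 hc2 k1 k2 with d1 | d1
  swap
  · exact Or.inr (Or.inl d1)
  rcases lemCd1 _ _ _ _ _ _ _ _ _ ha' h2 hx.sw hx'.sw c3 c2 hc3' hc2' k3 k2 with d3 | d3
  swap
  · exact Or.inr (Or.inr d3)
  by_cases e : c2 = x2
  · left; exact ⟨⟨k1, k2, k3⟩, d1, d3, Or.inl e⟩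
  by_cases q : (c1 + x1 ≤ x2 ∧ c1 + x3 ≤ c2 + x2)
  · left; exact ⟨⟨k1, k2, k3⟩, d1, d3, Or.inr (Or.inr (Or.inl q))⟩
  by_cases r : (c3 + x3 ≤ x2 ∧ c3 + x1 ≤ c2 + x2)
  · left; exact ⟨⟨k1, k2, k3⟩, d1, d3, Or.inr (Or.inr (Or.inr r))⟩
  by_cases p1 : x3 ≤ c1 + x2
  swap
  · exact Or.inr (Or.inl (lemCd2 _ _ _ _ _ _ _ _ _ ha h2 hx hx' c1 c2 hc1 hc2 k1 k2 e (by omega) q))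
  by_cases p3 : x1 ≤ c3 + x2
  swap
  · exact Or.inr (Or.inr (lemCd2 _ _ _ _ _ _ _ _ _ ha' h2 hx.sw hx'.sw c3 c2 hc3' hc2' k3 k2 e (by omega) r))
  left; exact ⟨⟨k1, k2, k3⟩, d1, d3, Or.inr (Or.inl ⟨p1, p3⟩)⟩

/-- an upper bound of both triples -/
def UB (a1 a2 a3 b1 b2 b3 x1 x2 x3 : ℤ) : Prop :=
  PP a1 a2 a3 x1 x2 x3 ∧ PP b1 b2 b3 x1 x2 x3

theorem UB.sw {a1 a2 a3 b1 b2 b3 x1 x2 x3 : ℤ} (h : UB a1 a2 a3 b1 b2 b3 x1 x2 x3) :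
    UB a3 a2 a1 b3 b2 b1 x3 x2 x1 := ⟨h.1.sw, h.2.sw⟩

/-- The combinatorial heart: one of five candidates is least among the upper bounds. -/
theorem cand (a1 a2 a3 b1 b2 b3 : ℤ)
    (ha : 0 ≤ a1 ∧ 0 ≤ a2 ∧ 0 ≤ a3) (hb : 0 ≤ b1 ∧ 0 ≤ b2 ∧ 0 ≤ b3) (h2 : a2 ≤ b2)
    (t1 t2 t3 c1 c2 c3 : ℤ)
    (ht1 : t1 = min (min a1 b1) (max (max (a3+b2) (a2+b3)) (a2+b2-b3)))
    (ht2 : t2 = min a2 (max (a1+b1) (a3+b3)))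
    (ht3 : t3 = min (min a3 b3) (max (max (a1+b2) (a2+b1)) (a2+b2-b1)))
    (hc1 : c1 = min (min a1 b1) (min (a2+b3) (a3+b2)))
    (hc2 : c2 = min a2 (min (a1+b1) (a3+b3)))
    (hc3 : c3 = min (min a3 b3) (min (a1+b2) (a2+b1)))
    (hc : UB a1 a2 a3 b1 b2 b3 c1 c2 c3) :
    ∃ m1 m2 m3 : ℤ, ((m1 = min a1 b1 ∧ m2 = a2 ∧ m3 = min a3 b3) ∨
      (m1 = t1 ∧ m2 = a2 ∧ m3 = min a3 b3) ∨ (m1 = min a1 b1 ∧ m2 = t2 ∧ m3 = min a3 b3) ∨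
      (m1 = min a1 b1 ∧ m2 = a2 ∧ m3 = t3) ∨ (m1 = c1 ∧ m2 = c2 ∧ m3 = c3)) ∧
      UB a1 a2 a3 b1 b2 b3 m1 m2 m3 ∧
      ∀ x1 x2 x3 : ℤ, 0 ≤ x1 → 0 ≤ x2 → 0 ≤ x3 → UB a1 a2 a3 b1 b2 b3 x1 x2 x3 →
        PP m1 m2 m3 x1 x2 x3 := by
  by_cases hU : UB a1 a2 a3 b1 b2 b3 (min a1 b1) a2 (min a3 b3)
  · exact ⟨_, _, _, Or.inl ⟨rfl, rfl, rfl⟩, hU, fun x1 x2 x3 p1 p2 p3 hx =>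
      lemA _ _ _ _ _ _ _ _ _ ⟨p1, p2, p3⟩ h2 hU.1 hU.2 hx.1 hx.2⟩
  by_cases h1 : UB a1 a2 a3 b1 b2 b3 t1 a2 (min a3 b3)
  · refine ⟨_, _, _, Or.inr (Or.inl ⟨rfl, rfl, rfl⟩), h1, fun x1 x2 x3 p1 p2 p3 hx => ?_⟩
    by_cases h : x1 ≤ t1
    · exact (lemB3 _ _ _ _ _ _ _ _ _ _ ⟨p3, p2, p1⟩ h2 ht1 h1.sw.1 h1.sw.2 hx.sw.1 hx.sw.2 h).sw
    · exact absurd (UB.sw (lemB3' _ _ _ _ _ _ _ _ _ _ ⟨p3, p2, p1⟩ h2 ht1 hx.sw.1 hx.sw.2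
        (not_le.mp h))) hU
  by_cases h3 : UB a1 a2 a3 b1 b2 b3 (min a1 b1) a2 t3
  · refine ⟨_, _, _, Or.inr (Or.inr (Or.inr (Or.inl ⟨rfl, rfl, rfl⟩))), h3,
      fun x1 x2 x3 p1 p2 p3 hx => ?_⟩
    by_cases h : x3 ≤ t3
    · exact (lemB3 _ _ _ _ _ _ _ _ _ _ ⟨p1, p2, p3⟩ h2 ht3 h3.1 h3.2 hx.1 hx.2 h)
    · exact absurd (lemB3' _ _ _ _ _ _ _ _ _ _ ⟨p1, p2, p3⟩ h2 ht3 hx.1 hx.2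
        (not_le.mp h)) hU
  by_cases h4 : UB a1 a2 a3 b1 b2 b3 (min a1 b1) t2 (min a3 b3)
  · refine ⟨_, _, _, Or.inr (Or.inr (Or.inl ⟨rfl, rfl, rfl⟩)), h4,
      fun x1 x2 x3 p1 p2 p3 hx => ?_⟩
    by_cases h : x2 ≤ t2
    · exact (lemB2 _ _ _ _ _ _ _ _ _ _ ⟨p1, p2, p3⟩ h2 ht2 h4.1 h4.2 hx.1 hx.2 h)
    · exact absurd (lemB2' _ _ _ _ _ _ _ _ _ _ ⟨p1, p2, p3⟩ h2 ht2 hx.1 hx.2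
        (not_le.mp h)) hU
  have nE : ¬ EE a1 a2 a3 b1 b3 := fun hE => by
    rcases lemE3 a1 a2 a3 b1 b2 b3 t3 t2 ⟨ha.1, ha.2.1, ha.2.2, hb.2.2⟩ h2 ht3 ht2 hE.1 hE.2.1 hE.2.2
      with h | h
    · exact h3 h
    · exact h4 h
  have nE' : ¬ EE a3 a2 a1 b3 b1 := fun hE => by
    rcases lemE3 a3 a2 a1 b3 b2 b1 t1 t2 ⟨ha.2.2, ha.2.1, ha.1, hb.1⟩ h2 ht1 (by rw [ht2, max_comm])
      hE.1 hE.2.1 hE.2.2 with h | h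
    · exact h1 (UB.sw h)
    · exact h4 (UB.sw h)
  refine ⟨_, _, _, Or.inr (Or.inr (Or.inr (Or.inr ⟨rfl, rfl, rfl⟩))), hc,
      fun x1 x2 x3 p1 p2 p3 hx => ?_⟩
  have hl := hx.1.1
  have hl' := hx.2.1
  have k1 : x1 ≤ c1 := by
    by_contra h
    have w : a3 + b2 < x1 ∨ a2 + b3 < x1 := by clear * - h hc1 hl hl'; omega
    exact h1 (UB.sw (lemC3 _ _ _ _ _ _ _ _ _ _ ⟨p3, p2, p1⟩ h2 ht1 hx.sw.1 hx.sw.2 w))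
  have k3 : x3 ≤ c3 := by
    by_contra h
    have w : a1 + b2 < x3 ∨ a2 + b1 < x3 := by clear * - h hc3 hl hl'; omega
    exact h3 ((lemC3 _ _ _ _ _ _ _ _ _ _ ⟨p1, p2, p3⟩ h2 ht3 hx.1 hx.2 w))
  have k2 : x2 ≤ c2 := by
    by_contra h
    have : a1 + b1 < x2 ∨ a3 + b3 < x2 := by clear * - h hc2 hl hl'; omega
    rcases this with h | h
    · exact nE (lemC2 _ _ _ _ _ _ _ _ _ ⟨p1, p2, p3⟩ h2 hx.1 hx.2 h)
    · exact nE' (lemC2 _ _ _ _ _ _ _ _ _ ⟨p3, p2, p1⟩ h2 hx.sw.1 hx.sw.2 h)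
  rcases lemC1 _ _ _ _ _ _ _ _ _ ⟨p1, p2, p3⟩ h2 hx.1 hx.2 c1 c2 c3 hc1 hc2 hc3 k1 k2 k3 with h | h | h
  · exact h
  · exact absurd h nE
  · exact absurd h nE'

/-- coordinates of an ideal -/
def Co (I : Set ℕ) (a1 a2 a3 : ℤ) : Prop :=
  (0 ≤ a1 ∧ 0 ≤ a2 ∧ 0 ≤ a3) ∧ (a1 % 4 = 1 ∧ a2 % 4 = 2 ∧ a3 % 4 = 3) ∧
  ∀ n : ℕ, n ∈ I ↔ (n % 4 = 0 ∨ (n % 4 = 1 ∧ a1 ≤ n) ∨ (n % 4 = 2 ∧ a2 ≤ n) ∨ (n % 4 = 3 ∧ a3 ≤ n))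

/-- closure under adding `s` -/
def IC (a1 a2 a3 s1 s2 s3 : ℤ) : Prop :=
  (a1 ≤ s1 ∧ a2 ≤ s2 ∧ a3 ≤ s3) ∧
  (a2 ≤ a1 + s1 ∧ a3 ≤ a1 + s2 ∧ a3 ≤ a2 + s1) ∧
  (a1 ≤ a2 + s3 ∧ a1 ≤ a3 + s2 ∧ a2 ≤ a3 + s3)

theorem Co.exists (S I : Set ℕ) (h4 : 4 ∈ S) (hf : Sᶜ.Finite) (hI : IsNormalizedIdeal S I) :
    ∃ a1 a2 a3, Co I a1 a2 a3 := by
  classical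
  have step : ∀ k n, n ∈ I → n + 4 * k ∈ I := by
    intro k
    induction k with
    | zero => intro n hn; simpa using hn
    | succ k ih => intro n hn; have := hI.2 _ (ih n hn) 4 h4; convert this using 1; omega
  obtain ⟨B, hB⟩ := hf.bddAbove
  have big : ∀ n, B < n → n ∈ I := by
    intro n hn
    have : n ∈ S := by
      by_contra h
      exact absurd (hB h) (by omega)
    simpa using hI.2 0 hI.1 n this
  have key : ∀ r, r < 4 → ∃ a : ℕ, a % 4 = r ∧ ∀ n, n % 4 = r → (n ∈ I ↔ a ≤ n) := by
    intro r hr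
    have hex : ∃ n, n ∈ I ∧ n % 4 = r := ⟨4 * (B + 1) + r, big _ (by omega), by omega⟩
    refine ⟨Nat.find hex, (Nat.find_spec hex).2, fun n hn => ⟨fun h => Nat.find_min' hex ⟨h, hn⟩, fun h => ?_⟩⟩
    have e := (Nat.find_spec hex).2
    have := step ((n - Nat.find hex) / 4) _ (Nat.find_spec hex).1
    convert this using 1
    omega
  obtain ⟨a1, e1, h1⟩ := key 1 (by norm_num)
  obtain ⟨a2, e2, h2⟩ := key 2 (by norm_num)
  obtain ⟨a3, e3, h3⟩ := key 3 (by norm_num)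
  refine ⟨a1, a2, a3, by omega, by omega, fun n => ?_⟩
  have : n % 4 = 0 ∨ n % 4 = 1 ∨ n % 4 = 2 ∨ n % 4 = 3 := by omega
  rcases this with h | h | h | h
  · have := step (n / 4) 0 hI.1
    have e : 0 + 4 * (n / 4) = n := by omega
    rw [e] at this
    simp [this, h]
  · rw [h1 n h]; omega
  · rw [h2 n h]; omega
  · rw [h3 n h]; omega

theorem Co.mem1 {I : Set ℕ} {a1 a2 a3 : ℤ} (h : Co I a1 a2 a3) : a1.toNat ∈ I := by
  obtain ⟨h1, h2, h3⟩ := h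
  rw [h3]; omega
theorem Co.mem2 {I : Set ℕ} {a1 a2 a3 : ℤ} (h : Co I a1 a2 a3) : a2.toNat ∈ I := by
  obtain ⟨h1, h2, h3⟩ := h
  rw [h3]; omega
theorem Co.mem3 {I : Set ℕ} {a1 a2 a3 : ℤ} (h : Co I a1 a2 a3) : a3.toNat ∈ I := by
  obtain ⟨h1, h2, h3⟩ := h
  rw [h3]; omega

theorem Co.ic {S I : Set ℕ} {a1 a2 a3 s1 s2 s3 : ℤ} (hI : IsNormalizedIdeal S I)
    (h : Co I a1 a2 a3) (hs : Co S s1 s2 s3) : IC a1 a2 a3 s1 s2 s3 := by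
  have m1 := hI.2 _ hI.1 _ hs.mem1
  have m2 := hI.2 _ hI.1 _ hs.mem2
  have m3 := hI.2 _ hI.1 _ hs.mem3
  have m11 := hI.2 _ h.mem1 _ hs.mem1
  have m12 := hI.2 _ h.mem1 _ hs.mem2
  have m21 := hI.2 _ h.mem2 _ hs.mem1
  have m23 := hI.2 _ h.mem2 _ hs.mem3
  have m32 := hI.2 _ h.mem3 _ hs.mem2
  have m33 := hI.2 _ h.mem3 _ hs.mem3
  obtain ⟨p1, p2, p3⟩ := h
  obtain ⟨q1, q2, q3⟩ := hs
  rw [p3] at m1 m2 m3 m11 m12 m21 m23 m32 m33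
  clear p3 q3
  refine ⟨⟨?_, ?_, ?_⟩, ⟨?_, ?_, ?_⟩, ⟨?_, ?_, ?_⟩⟩
  · clear m2 m3 m11 m12 m21 m23 m32 m33; omega
  · clear m1 m3 m11 m12 m21 m23 m32 m33; omega
  · clear m1 m2 m11 m12 m21 m23 m32 m33; omega
  · clear m1 m2 m3 m12 m21 m23 m32 m33; omega
  · clear m1 m2 m3 m11 m21 m23 m32 m33; omega
  · clear m1 m2 m3 m11 m12 m23 m32 m33; omega
  · clear m1 m2 m3 m11 m12 m21 m32 m33; omega
  · clear m1 m2 m3 m11 m12 m21 m23 m33; omega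
  · clear m1 m2 m3 m11 m12 m21 m23 m32; omega

theorem Co.ideal {S M : Set ℕ} {a1 a2 a3 s1 s2 s3 : ℤ}
    (h : Co M a1 a2 a3) (hs : Co S s1 s2 s3) (hi : IC a1 a2 a3 s1 s2 s3) :
    IsNormalizedIdeal S M := by
  obtain ⟨p1, p2, p3⟩ := h
  obtain ⟨q1, q2, q3⟩ := hs
  obtain ⟨i1, i2, i3⟩ := hi
  refine ⟨by rw [p3]; simp, fun i hi s hs => ?_⟩
  rw [p3] at hi ⊢
  rw [q3] at hs
  clear p3 q3
  rcases hi with hi | hi | hi | hi <;> rcases hs with hs | hs | hs | hs <;> omega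

/-- the set with given coordinates -/
def mkI (a1 a2 a3 : ℤ) : Set ℕ :=
  {n : ℕ | n % 4 = 0 ∨ (n % 4 = 1 ∧ a1 ≤ n) ∨ (n % 4 = 2 ∧ a2 ≤ n) ∨ (n % 4 = 3 ∧ a3 ≤ n)}

theorem co_mk (a1 a2 a3 : ℤ) (h : 0 ≤ a1 ∧ 0 ≤ a2 ∧ 0 ≤ a3)
    (h' : a1 % 4 = 1 ∧ a2 % 4 = 2 ∧ a3 % 4 = 3) : Co (mkI a1 a2 a3) a1 a2 a3 :=
  ⟨h, h', fun _ => Iff.rfl⟩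

/-- coordinates of a sum -/
def AD (a1 a2 a3 b1 b2 b3 c1 c2 c3 : ℤ) : Prop :=
  c1 = min (min a1 b1) (min (a2+b3) (a3+b2)) ∧
  c2 = min (min a2 b2) (min (a1+b1) (a3+b3)) ∧
  c3 = min (min a3 b3) (min (a1+b2) (a2+b1))

theorem AD.pp {a1 a2 a3 b1 b2 b3 c1 c2 c3 : ℤ} (h : AD a1 a2 a3 b1 b2 b3 c1 c2 c3)
    (ha : 0 ≤ a1 ∧ 0 ≤ a2 ∧ 0 ≤ a3) (hb : 0 ≤ b1 ∧ 0 ≤ b2 ∧ 0 ≤ b3) :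
    PP a1 a2 a3 c1 c2 c3 := by
  obtain ⟨h1, h2, h3⟩ := h
  have l1 : c1 ≤ a1 ∧ c1 ≤ b1 ∧ c1 ≤ a2 + b3 ∧ c1 ≤ a3 + b2 := by clear h2 h3; omega
  have l2 : c2 ≤ a2 ∧ c2 ≤ b2 ∧ c2 ≤ a1 + b1 ∧ c2 ≤ a3 + b3 := by clear h1 h3; omega
  have l3 : c3 ≤ a3 ∧ c3 ≤ b3 ∧ c3 ≤ a1 + b2 ∧ c3 ≤ a2 + b1 := by clear h1 h2; omega
  have e1 : c1 = a1 ∨ c1 = b1 ∨ c1 = a2 + b3 ∨ c1 = a3 + b2 := by clear h2 h3 l2 l3; omega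
  have e2 : c2 = a2 ∨ c2 = b2 ∨ c2 = a1 + b1 ∨ c2 = a3 + b3 := by clear h1 h3 l1 l3; omega
  have e3 : c3 = a3 ∨ c3 = b3 ∨ c3 = a1 + b2 ∨ c3 = a2 + b1 := by clear h1 h2 l1 l2; omega
  clear h1 h2 h3
  refine ⟨by omega, ?_, ?_, ?_⟩
  · clear e2 e3; omega
  · clear e1 e2; omega
  · clear e1 e3; omega

theorem co_add {I J : Set ℕ} {a1 a2 a3 b1 b2 b3 c1 c2 c3 : ℤ}
    (ha : Co I a1 a2 a3) (hb : Co J b1 b2 b3) (hc : Co (I + J) c1 c2 c3) :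
    AD a1 a2 a3 b1 b2 b3 c1 c2 c3 := by
  have z1 : 0 ∈ I := by rw [ha.2.2]; simp
  have z2 : 0 ∈ J := by rw [hb.2.2]; simp
  have w1 := hc.mem1
  have w2 := hc.mem2
  have w3 := hc.mem3
  have v10 := Set.add_mem_add ha.mem1 z2
  have v20 := Set.add_mem_add ha.mem2 z2
  have v30 := Set.add_mem_add ha.mem3 z2
  have v01 := Set.add_mem_add z1 hb.mem1
  have v02 := Set.add_mem_add z1 hb.mem2
  have v03 := Set.add_mem_add z1 hb.mem3
  have v11 := Set.add_mem_add ha.mem1 hb.mem1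
  have v12 := Set.add_mem_add ha.mem1 hb.mem2
  have v21 := Set.add_mem_add ha.mem2 hb.mem1
  have v23 := Set.add_mem_add ha.mem2 hb.mem3
  have v32 := Set.add_mem_add ha.mem3 hb.mem2
  have v33 := Set.add_mem_add ha.mem3 hb.mem3
  obtain ⟨p1, p2, p3⟩ := ha
  obtain ⟨q1, q2, q3⟩ := hb
  obtain ⟨r1, r2, r3⟩ := hc
  rw [r3] at v10 v20 v30 v01 v02 v03 v11 v12 v21 v23 v32 v33
  have l10 : c1 ≤ a1 := by clear * - v10 p1 p2 r1 r2; omega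
  have l20 : c2 ≤ a2 := by clear * - v20 p1 p2 r1 r2; omega
  have l30 : c3 ≤ a3 := by clear * - v30 p1 p2 r1 r2; omega
  have l01 : c1 ≤ b1 := by clear * - v01 q1 q2 r1 r2; omega
  have l02 : c2 ≤ b2 := by clear * - v02 q1 q2 r1 r2; omega
  have l03 : c3 ≤ b3 := by clear * - v03 q1 q2 r1 r2; omega
  have l11 : c2 ≤ a1 + b1 := by clear * - v11 p1 p2 q1 q2 r1 r2; omega
  have l12 : c3 ≤ a1 + b2 := by clear * - v12 p1 p2 q1 q2 r1 r2; omega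
  have l21 : c3 ≤ a2 + b1 := by clear * - v21 p1 p2 q1 q2 r1 r2; omega
  have l23 : c1 ≤ a2 + b3 := by clear * - v23 p1 p2 q1 q2 r1 r2; omega
  have l32 : c1 ≤ a3 + b2 := by clear * - v32 p1 p2 q1 q2 r1 r2; omega
  have l33 : c2 ≤ a3 + b3 := by clear * - v33 p1 p2 q1 q2 r1 r2; omega
  clear v10 v20 v30 v01 v02 v03 v11 v12 v21 v23 v32 v33
  obtain ⟨i, hi, j, hj, e1⟩ := w1
  obtain ⟨i', hi', j', hj', e2⟩ := w2
  obtain ⟨i'', hi'', j'', hj'', e3⟩ := w3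
  rw [p3] at hi hi' hi''
  rw [q3] at hj hj' hj''
  simp only at e1 e2 e3
  refine ⟨?_, ?_, ?_⟩
  · clear * - hi hj e1 l10 l01 l23 l32 p1 p2 q1 q2 r1 r2
    rcases hi with hi | hi | hi | hi <;> rcases hj with hj | hj | hj | hj <;> omega
  · clear * - hi' hj' e2 l20 l02 l11 l33 p1 p2 q1 q2 r1 r2
    rcases hi' with hi | hi | hi | hi <;> rcases hj' with hj | hj | hj | hj <;> omega
  · clear * - hi'' hj'' e3 l30 l03 l12 l21 p1 p2 q1 q2 r1 r2
    rcases hi'' with hi | hi | hi | hi <;> rcases hj'' with hj | hj | hj | hj <;> omega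

theorem pp_of_preceq {S I L : Set ℕ} (h4 : 4 ∈ S) (hf : Sᶜ.Finite) {a1 a2 a3 x1 x2 x3 : ℤ}
    (ha : Co I a1 a2 a3) (hx : Co L x1 x2 x3) (h : Preceq S I L) : PP a1 a2 a3 x1 x2 x3 := by
  obtain ⟨K, hK, rfl⟩ := h
  obtain ⟨k1, k2, k3, hk⟩ := Co.exists S K h4 hf hK
  exact (co_add ha hk hx).pp ha.1 hk.1

theorem preceq_of_pp {S I L : Set ℕ} {a1 a2 a3 x1 x2 x3 : ℤ} (hL : IsNormalizedIdeal S L)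
    (ha : Co I a1 a2 a3) (hx : Co L x1 x2 x3) (h : PP a1 a2 a3 x1 x2 x3) : Preceq S I L := by
  obtain ⟨p1, p2, p3⟩ := ha
  obtain ⟨q1, q2, q3⟩ := hx
  obtain ⟨l, h1, h3, h2⟩ := h
  have zI : 0 ∈ I := by rw [p3]; simp
  have zK : ∀ i ∈ I, 0 + i ∈ L := fun i hi => by
    rw [p3] at hi
    rw [q3]
    clear h1 h2 h3 p3 q3
    omega
  refine ⟨{z | ∀ i ∈ I, z + i ∈ L}, ⟨zK, fun z hz s hs i hi => ?_⟩, ?_⟩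
  · have := hL.2 _ (hz i hi) s hs
    rwa [add_right_comm]
  ext n
  constructor
  · rintro ⟨i, hi, z, hz, rfl⟩
    have := hz i hi
    rwa [add_comm] at this
  · intro hn
    have fromI : n ∈ I → n ∈ I + {z | ∀ i ∈ I, z + i ∈ L} :=
      fun h => ⟨n, h, 0, zK, by simp⟩
    have fromK : (∀ i ∈ I, n + i ∈ L) → n ∈ I + {z | ∀ i ∈ I, z + i ∈ L} :=
      fun h => ⟨0, zI, n, h, by simp⟩
    rw [q3] at hn
    rcases hn with hn | hn | hn | hn
    · exact fromI (by rw [p3]; exact Or.inl hn)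
    · rcases h1 with h1 | h1
      · exact fromI (by rw [p3]; clear h2 h3; omega)
      · refine fromK fun i hi => ?_
        rw [p3] at hi
        rw [q3]
        clear p3 q3 h2 h3
        rcases hi with hi | hi | hi | hi <;> omega
    · rcases h2 with h2 | h2 | h2 | h2
      · exact fromI (by rw [p3]; clear h1 h3; omega)
      · refine fromK fun i hi => ?_
        rw [p3] at hi
        rw [q3]
        clear p3 q3 h1 h3
        rcases hi with hi | hi | hi | hi <;> omega
      · refine ⟨a1.toNat, by rw [p3]; omega, n - a1.toNat, fun i hi => ?_, by simp only; omega⟩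
        rw [p3] at hi
        rw [q3]
        clear p3 q3 h1 h3
        rcases hi with hi | hi | hi | hi <;> omega
      · refine ⟨a3.toNat, by rw [p3]; omega, n - a3.toNat, fun i hi => ?_, by simp only; omega⟩
        rw [p3] at hi
        rw [q3]
        clear p3 q3 h1 h3
        rcases hi with hi | hi | hi | hi <;> omega
    · rcases h3 with h3 | h3
      · exact fromI (by rw [p3]; clear h1 h2; omega)
      · refine fromK fun i hi => ?_
        rw [p3] at hi
        rw [q3]
        clear p3 q3 h1 h2
        rcases hi with hi | hi | hi | hi <;> omega

/-- nonnegative, right residues, closed -/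
def OK (a1 a2 a3 s1 s2 s3 : ℤ) : Prop :=
  (0 ≤ a1 ∧ 0 ≤ a2 ∧ 0 ≤ a3) ∧ (a1 % 4 = 1 ∧ a2 % 4 = 2 ∧ a3 % 4 = 3) ∧ IC a1 a2 a3 s1 s2 s3

theorem ok1 (a1 a2 a3 b1 b2 b3 s1 s2 s3 : ℤ) (hs : 0 ≤ s1 ∧ 0 ≤ s2 ∧ 0 ≤ s3)
    (h2 : a2 ≤ b2) (ia : OK a1 a2 a3 s1 s2 s3) (ib : OK b1 b2 b3 s1 s2 s3) (m1 m3 : ℤ)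
    (e1 : m1 = a1 ∨ m1 = b1 ∨ ((m1 = a3 + b2 ∨ m1 = a2 + b3 ∨ m1 = a2 + b2 - b3) ∧
      a2 + b3 ≤ m1 ∧ a3 + b2 ≤ m1))
    (l1 : m1 ≤ a1 ∧ m1 ≤ b1) (e3 : m3 = a3 ∨ m3 = b3) (l3 : m3 ≤ a3 ∧ m3 ≤ b3) :
    OK m1 a2 m3 s1 s2 s3 := by
  obtain ⟨na, ra, ia1, ia2, ia3⟩ := ia
  obtain ⟨nb, rb, ib1, ib2, ib3⟩ := ib
  refine ⟨?_, ?_, ?_, ?_, ?_⟩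
  · omega
  · omega
  all_goals
    clear ra rb
    rcases e1 with e1 | e1 | ⟨-, e1⟩ <;> rcases e3 with e3 | e3 <;>
      refine ⟨?_, ?_, ?_⟩ <;> omega

theorem ok3 (a1 a2 a3 b1 b2 b3 s1 s2 s3 : ℤ) (hs : 0 ≤ s1 ∧ 0 ≤ s2 ∧ 0 ≤ s3)
    (h2 : a2 ≤ b2) (ia : OK a1 a2 a3 s1 s2 s3) (ib : OK b1 b2 b3 s1 s2 s3) (m1 m3 : ℤ)
    (e1 : m3 = a3 ∨ m3 = b3 ∨ ((m3 = a1 + b2 ∨ m3 = a2 + b1 ∨ m3 = a2 + b2 - b1) ∧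
      a2 + b1 ≤ m3 ∧ a1 + b2 ≤ m3))
    (l1 : m3 ≤ a3 ∧ m3 ≤ b3) (e3 : m1 = a1 ∨ m1 = b1) (l3 : m1 ≤ a1 ∧ m1 ≤ b1) :
    OK m1 a2 m3 s1 s2 s3 := by
  obtain ⟨na, ra, ia1, ia2, ia3⟩ := ia
  obtain ⟨nb, rb, ib1, ib2, ib3⟩ := ib
  refine ⟨?_, ?_, ?_, ?_, ?_⟩
  · omega
  · omega
  all_goals
    clear ra rb
    rcases e1 with e1 | e1 | ⟨-, e1⟩ <;> rcases e3 with e3 | e3 <;>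
      refine ⟨?_, ?_, ?_⟩ <;> omega

theorem ok2 (a1 a2 a3 b1 b2 b3 s1 s2 s3 : ℤ) (hs : 0 ≤ s1 ∧ 0 ≤ s2 ∧ 0 ≤ s3)
    (h2 : a2 ≤ b2) (ia : OK a1 a2 a3 s1 s2 s3) (ib : OK b1 b2 b3 s1 s2 s3) (m1 m2 m3 : ℤ)
    (e1 : m1 = a1 ∨ m1 = b1) (l1 : m1 ≤ a1 ∧ m1 ≤ b1)
    (e2 : m2 = a2 ∨ ((m2 = a1 + b1 ∨ m2 = a3 + b3) ∧ a1 + b1 ≤ m2 ∧ a3 + b3 ≤ m2))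
    (l2 : m2 ≤ a2)
    (e3 : m3 = a3 ∨ m3 = b3) (l3 : m3 ≤ a3 ∧ m3 ≤ b3) :
    OK m1 m2 m3 s1 s2 s3 := by
  obtain ⟨na, ra, ia1, ia2, ia3⟩ := ia
  obtain ⟨nb, rb, ib1, ib2, ib3⟩ := ib
  refine ⟨?_, ?_, ?_, ?_, ?_⟩
  · omega
  · omega
  all_goals
    clear ra rb
    rcases e1 with e1 | e1 <;> rcases e2 with e2 | ⟨-, e2⟩ <;> rcases e3 with e3 | e3 <;>
      refine ⟨?_, ?_, ?_⟩ <;> omega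

theorem okc (a1 a2 a3 b1 b2 b3 s1 s2 s3 : ℤ) (hs : 0 ≤ s1 ∧ 0 ≤ s2 ∧ 0 ≤ s3)
    (h2 : a2 ≤ b2) (ia : OK a1 a2 a3 s1 s2 s3) (ib : OK b1 b2 b3 s1 s2 s3) (m1 m2 m3 : ℤ)
    (e1 : m1 = a1 ∨ m1 = b1 ∨ m1 = a2 + b3 ∨ m1 = a3 + b2)
    (l1 : m1 ≤ a1 ∧ m1 ≤ b1 ∧ m1 ≤ a2 + b3 ∧ m1 ≤ a3 + b2)
    (e2 : m2 = a2 ∨ m2 = a1 + b1 ∨ m2 = a3 + b3)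
    (l2 : m2 ≤ a2 ∧ m2 ≤ a1 + b1 ∧ m2 ≤ a3 + b3)
    (e3 : m3 = a3 ∨ m3 = b3 ∨ m3 = a1 + b2 ∨ m3 = a2 + b1)
    (l3 : m3 ≤ a3 ∧ m3 ≤ b3 ∧ m3 ≤ a1 + b2 ∧ m3 ≤ a2 + b1) :
    OK m1 m2 m3 s1 s2 s3 := by
  obtain ⟨na, ra, ia1, ia2, ia3⟩ := ia
  obtain ⟨nb, rb, ib1, ib2, ib3⟩ := ib
  refine ⟨?_, ?_, ?_, ⟨?_, ?_, ?_⟩, ?_⟩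
  · clear ra rb ia1 ib1 ia2 ib2 ia3 ib3 l1 l2 l3; omega
  · clear ia1 ib1 ia2 ib2 ia3 ib3 na nb l1 l2 l3; omega
  · clear e1 e2 e3 ra rb; omega
  · clear ra rb e2 e3; rcases e1 with e | e | e | e <;> omega
  · clear ra rb e2 e3; rcases e1 with e | e | e | e <;> omega
  · clear ra rb e1 e3; rcases e2 with e | e | e <;> omega
  · refine ⟨?_, ?_, ?_⟩
    · clear ra rb e1 e3; rcases e2 with e | e | e <;> omega
    · clear ra rb e1 e2; rcases e3 with e | e | e | e <;> omega
    · clear ra rb e1 e2; rcases e3 with e | e | e | e <;> omega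

theorem mm (x y z : ℤ) (h : z = min x y) : (z = x ∨ z = y) ∧ (z ≤ x ∧ z ≤ y) := by omega
theorem mm3 (a b u v w z : ℤ) (h : z = min (min a b) (max (max u v) w)) :
    (z = a ∨ z = b ∨ ((z = u ∨ z = v ∨ z = w) ∧ v ≤ z ∧ u ≤ z)) ∧ (z ≤ a ∧ z ≤ b) := by omega
theorem mm2 (a u v z : ℤ) (h : z = min a (max u v)) :
    (z = a ∨ ((z = u ∨ z = v) ∧ u ≤ z ∧ v ≤ z)) ∧ z ≤ a := by omega
theorem mm4 (a b u v z : ℤ) (h : z = min (min a b) (min u v)) :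
    (z = a ∨ z = b ∨ z = u ∨ z = v) ∧ (z ≤ a ∧ z ≤ b ∧ z ≤ u ∧ z ≤ v) := by omega
theorem mm5 (a u v z : ℤ) (h : z = min a (min u v)) :
    (z = a ∨ z = u ∨ z = v) ∧ (z ≤ a ∧ z ≤ u ∧ z ≤ v) := by omega

theorem sup_aux (a1 a2 a3 b1 b2 b3 s1 s2 s3 : ℤ) (hs : 0 ≤ s1 ∧ 0 ≤ s2 ∧ 0 ≤ s3)
    (h2 : a2 ≤ b2) (ia : OK a1 a2 a3 s1 s2 s3) (ib : OK b1 b2 b3 s1 s2 s3) :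
    ∃ m1 m2 m3 : ℤ, OK m1 m2 m3 s1 s2 s3 ∧ UB a1 a2 a3 b1 b2 b3 m1 m2 m3 ∧
      ∀ x1 x2 x3 : ℤ, 0 ≤ x1 → 0 ≤ x2 → 0 ≤ x3 → UB a1 a2 a3 b1 b2 b3 x1 x2 x3 →
        PP m1 m2 m3 x1 x2 x3 := by
  have hc : UB a1 a2 a3 b1 b2 b3 (min (min a1 b1) (min (a2+b3) (a3+b2)))
      (min a2 (min (a1+b1) (a3+b3))) (min (min a3 b3) (min (a1+b2) (a2+b1))) := by
    have e2 : min a2 (min (a1+b1) (a3+b3)) = min (min a2 b2) (min (a1+b1) (a3+b3)) := by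
      rw [min_eq_left h2]
    rw [e2]
    refine ⟨AD.pp (b1 := b1) (b2 := b2) (b3 := b3) ⟨rfl, rfl, rfl⟩ ia.1 ib.1,
      AD.pp (b1 := a1) (b2 := a2) (b3 := a3) ⟨?_, ?_, ?_⟩ ib.1 ia.1⟩
    · rw [min_comm a1 b1, min_comm (a2 + b3), add_comm a2, add_comm a3]
    · rw [min_comm a2 b2, add_comm a1, add_comm a3]
    · rw [min_comm a3 b3, min_comm (a1 + b2), add_comm a1, add_comm a2]
  obtain ⟨m1, m2, m3, hm, h, h'⟩ := cand a1 a2 a3 b1 b2 b3 ia.1 ib.1 h2 _ _ _ _ _ _ rfl rfl rfl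
    rfl rfl rfl hc
  refine ⟨m1, m2, m3, ?_, h, h'⟩
  clear h h' hc
  rcases hm with ⟨q1, q2, q3⟩ | ⟨q1, q2, q3⟩ | ⟨q1, q2, q3⟩ | ⟨q1, q2, q3⟩ | ⟨q1, q2, q3⟩
  · subst q2
    obtain ⟨u, v⟩ := mm _ _ _ q1
    obtain ⟨u', v'⟩ := mm _ _ _ q3
    exact ok1 _ _ _ _ _ _ _ _ _ hs h2 ia ib _ _ (u.elim Or.inl (fun h => Or.inr (Or.inl h))) v u' v'
  · subst q2
    obtain ⟨u, v⟩ := mm3 _ _ _ _ _ _ q1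
    obtain ⟨u', v'⟩ := mm _ _ _ q3
    exact ok1 _ _ _ _ _ _ _ _ _ hs h2 ia ib _ _ u v u' v'
  · obtain ⟨u, v⟩ := mm _ _ _ q1
    obtain ⟨u', v'⟩ := mm2 _ _ _ _ q2
    obtain ⟨u'', v''⟩ := mm _ _ _ q3
    exact ok2 _ _ _ _ _ _ _ _ _ hs h2 ia ib _ _ _ u v u' v' u'' v''
  · subst q2
    obtain ⟨u, v⟩ := mm3 _ _ _ _ _ _ q3
    obtain ⟨u', v'⟩ := mm _ _ _ q1
    exact ok3 _ _ _ _ _ _ _ _ _ hs h2 ia ib _ _ u v u' v'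
  · obtain ⟨u, v⟩ := mm4 _ _ _ _ _ q1
    obtain ⟨u', v'⟩ := mm5 _ _ _ _ q2
    obtain ⟨u'', v''⟩ := mm4 _ _ _ _ _ q3
    exact okc _ _ _ _ _ _ _ _ _ hs h2 ia ib _ _ _ u v u' v' u'' v''

theorem exists_sup {S : Set ℕ} (hS : IsNumericalSemigroup S) (h4 : 4 ∈ S) (I J : Set ℕ)
    (hI : IsNormalizedIdeal S I) (hJ : IsNormalizedIdeal S J) : ∃ M, IsSupNI S I J M := by
  have hSS : IsNormalizedIdeal S S := ⟨hS.1, hS.2.1⟩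
  have hf := hS.2.2
  obtain ⟨s1, s2, s3, hs⟩ := Co.exists S S h4 hf hSS
  have main : ∀ (I J : Set ℕ), IsNormalizedIdeal S I → IsNormalizedIdeal S J →
      ∀ a1 a2 a3 b1 b2 b3, Co I a1 a2 a3 → Co J b1 b2 b3 → a2 ≤ b2 → ∃ M, IsSupNI S I J M := by
    intro I J hI hJ a1 a2 a3 b1 b2 b3 ha hb h2
    obtain ⟨m1, m2, m3, ok, ub, hx⟩ := sup_aux a1 a2 a3 b1 b2 b3 s1 s2 s3 hs.1 h2
      ⟨ha.1, ha.2.1, Co.ic hI ha hs⟩ ⟨hb.1, hb.2.1, Co.ic hJ hb hs⟩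
    have hM := co_mk m1 m2 m3 ok.1 ok.2.1
    have hMi := Co.ideal hM hs ok.2.2
    refine ⟨mkI m1 m2 m3, hMi, preceq_of_pp hMi ha hM ub.1, preceq_of_pp hMi hb hM ub.2, ?_⟩
    intro L hL hIL hJL
    obtain ⟨x1, x2, x3, hxL⟩ := Co.exists S L h4 hf hL
    exact preceq_of_pp hL hM hxL (hx x1 x2 x3 hxL.1.1 hxL.1.2.1 hxL.1.2.2
      ⟨pp_of_preceq h4 hf ha hxL hIL, pp_of_preceq h4 hf hb hxL hJL⟩)
  obtain ⟨a1, a2, a3, ha⟩ := Co.exists S I h4 hf hI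
  obtain ⟨b1, b2, b3, hb⟩ := Co.exists S J h4 hf hJ
  rcases le_total a2 b2 with h | h
  · exact main I J hI hJ _ _ _ _ _ _ ha hb h
  · obtain ⟨M, q1, q2, q3, q4⟩ := main J I hJ hI _ _ _ _ _ _ hb ha h
    exact ⟨M, q1, q3, q2, fun L hL u v => q4 L hL v u⟩

theorem Preceq.subset {S I J : Set ℕ} (h : Preceq S I J) : I ⊆ J := by
  obtain ⟨K, hK, rfl⟩ := h
  intro i hi
  exact ⟨i, hi, 0, hK.1, by simp⟩

theorem finite_ideals {S : Set ℕ} (hf : Sᶜ.Finite) : {I | IsNormalizedIdeal S I}.Finite := by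
  refine (hf.finite_subsets.image compl).subset ?_
  intro I hI
  refine ⟨Iᶜ, ?_, compl_compl I⟩
  intro n hn hnS
  exact hn (by simpa using hI.2 0 hI.1 n hnS)

theorem exists_inf {S : Set ℕ} (hS : IsNumericalSemigroup S) (h4 : 4 ∈ S) (I J : Set ℕ)
    (hI : IsNormalizedIdeal S I) (hJ : IsNormalizedIdeal S J) : ∃ M, IsInfNI S I J M := by
  have hSS : IsNormalizedIdeal S S := ⟨hS.1, hS.2.1⟩
  have hbot : ∀ I, IsNormalizedIdeal S I → Preceq S S I := by
    intro I hI
    refine ⟨I, hI, ?_⟩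
    ext n
    constructor
    · rintro ⟨s, hs, i, hi, rfl⟩
      have := hI.2 i hi s hs
      rwa [add_comm] at this
    · intro hn
      exact ⟨0, hS.1, n, hn, by simp⟩
  have hfin : {L | IsNormalizedIdeal S L ∧ Preceq S L I ∧ Preceq S L J}.Finite :=
    (finite_ideals hS.2.2).subset fun L hL => hL.1
  obtain ⟨M, hM⟩ := hfin.exists_maximal ⟨S, hSS, hbot I hI, hbot J hJ⟩
  refine ⟨M, hM.1.1, hM.1.2.1, hM.1.2.2, fun L hL hLI hLJ => ?_⟩
  obtain ⟨M', k1, k2, k3, k4⟩ := exists_sup hS h4 L M hL hM.1.1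
  have hmem : M' ∈ {L | IsNormalizedIdeal S L ∧ Preceq S L I ∧ Preceq S L J} :=
    ⟨k1, k4 I hI hLI hM.1.2.1, k4 J hJ hLJ hM.1.2.2⟩
  have e : M' = M := Set.Subset.antisymm (hM.2 hmem k3.subset) k3.subset
  rwa [e] at k2

/-- Corollary: if `S` has multiplicity four, then `(𝔑(S), ⪯)` is
a lattice. -/
theorem NILattice_of_mult_four (S : Set ℕ) (hS : IsNumericalSemigroup S)
    (hm : multNS S = 4) : NILattice S := by
  have h4 : 4 ∈ S := by
    have hne : {n : ℕ | n ∈ S ∧ n ≠ 0}.Nonempty := by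
      by_contra h
      rw [Set.not_nonempty_iff_eq_empty] at h
      rw [multNS, h, Nat.sInf_empty] at hm
      omega
    have := Nat.sInf_mem hne
    have e : sInf {n : ℕ | n ∈ S ∧ n ≠ 0} = 4 := hm
    rw [e] at this
    exact this.1
  intro I J hI hJ
  exact ⟨exists_sup hS h4 I J hI hJ, exists_inf hS h4 I J hI hJ⟩
end
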